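/- arXiv:1509.02226 — 2 statements merged into one kernel-verified Lean document; each statement's English description precedes it below -/
import Mathlib

section
/- The integrated density of states exists and is Lipschitz continuous: for every E ∈ ℝ the limit N(E) = lim_{n→∞} (1/n) ∫₀¹ Ñ_n(x,E) dx exists, and for all E ≤ E' one has N(E') − N(E) ≤ (E' − E) / (λ (1 − ρ(α)) γ₋). -/
/-!
The bound holds already for each finite box, with the better constant `1 / (lam * γm)`; this
suffices because `0 ≤ cfRho α ≤ 1 / 2`.

Let `δ = (E' - E) / (lam * γm)`. Passing from the phase `x` to `x + δ` raises the diagonal entry at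
site `i` by at least `E' - E`, unless `x + iα` crosses an integer on the way. By a min-max argument
(`countEigLE_le_add_card`) the box at phase `x + δ` has at most as many eigenvalues in `(-∞, E']` as
the box at phase `x` has in `(-∞, E]`, plus the number of crossings (`count_shift`). Averaged over a
period, the left side does not see the shift, and the number of crossings is `n * δ`
(`integral_floorSum_shift`).

The same inequality with `γm` replaced by `0` and `E' = E` shows that the counting function, minus a
sum of floor functions, is antitone in `x`; so it is integrable (`count_intervalIntegrable`). The
limit exists by Fekete's lemma, because the counting functions are subadditive in the box length
up to the constant `2` (`count_subadd`).
-/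

open MeasureTheory Filter

noncomputable section

/-- Iterates of the Gauss map applied to the fractional part of `α`. -/
noncomputable def gaussIter (α : ℝ) : ℕ → ℝ
  | 0 => Int.fract α
  | n + 1 => Int.fract (1 / gaussIter α n)

/-- The continued fraction partial quotient `a_{k+1}` of `α`. -/
noncomputable def cfA (α : ℝ) (k : ℕ) : ℕ := (⌊1 / gaussIter α k⌋).toNat

/-- Denominators `q_k` of the continued fraction convergents of `α`. -/
noncomputable def cfDen (α : ℝ) : ℕ → ℕ
  | 0 => 1
  | 1 => cfA α 0
  | k + 2 => cfA α (k + 1) * cfDen α (k + 1) + cfDen α k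

/-- `ρ(α) = liminf_{k → ∞} q_{k-1} / q_{k+1}`. -/
noncomputable def cfRho (α : ℝ) : ℝ :=
  Filter.liminf (fun k : ℕ => (cfDen α k : ℝ) / (cfDen α (k + 2) : ℝ)) Filter.atTop

/-- The periodic restriction `H̃_n(x)`: the `n × n` symmetric matrix with diagonal entries
`λ v(x + mα)` and entries `1` at positions `(m, (m ± 1) mod n)`. -/
noncomputable def periodicMat (lam : ℝ) (v : ℝ → ℝ) (α : ℝ) (n : ℕ) (x : ℝ) :
    Matrix (Fin n) (Fin n) ℝ :=
  fun i j =>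
    if i = j then lam * v (x + ((i : ℕ) : ℝ) * α)
    else if (j : ℕ) = ((i : ℕ) + 1) % n ∨ (j : ℕ) = ((i : ℕ) + n - 1) % n then 1 else 0

/-- The number of eigenvalues of `M` (roots of its characteristic polynomial, with
multiplicity) lying in `(-∞, E]`. -/
noncomputable def countEigLE {n : ℕ} (M : Matrix (Fin n) (Fin n) ℝ) (E : ℝ) : ℕ :=
  ((Matrix.charpoly M).roots.filter (fun μ => μ ≤ E)).card

/-! ### Eigenvalue counting under finite rank perturbations -/

lemma quadForm_eq {n : ℕ} (M : Matrix (Fin n) (Fin n) ℝ) (w : Fin n → ℝ) :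
    w ⬝ᵥ (M.mulVec w) = ∑ i, ∑ j, w i * M i j * w j := by
  simp [dotProduct, Matrix.mulVec, Finset.mul_sum, mul_assoc]

/-- Orthogonal diagonalisation, in coordinates adapted to `countEigLE`: `U.mulVec w` lists the
coefficients of `w` in an orthonormal eigenbasis, with eigenvalues `d`. -/
lemma exists_diag {n : ℕ} {M : Matrix (Fin n) (Fin n) ℝ} (hM : M.IsHermitian) :
    ∃ (U : Matrix (Fin n) (Fin n) ℝ) (d : Fin n → ℝ),
      (∀ w : Fin n → ℝ, w ⬝ᵥ (M.mulVec w) = ∑ i, d i * (U.mulVec w i) ^ 2) ∧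
      (∀ w : Fin n → ℝ, ∑ i, (w i) ^ 2 = ∑ i, (U.mulVec w i) ^ 2) ∧
      ∀ E, countEigLE M E = (Finset.univ.filter (fun i => d i ≤ E)).card := by
  classical
  set V : Matrix (Fin n) (Fin n) ℝ := (hM.eigenvectorUnitary : Matrix (Fin n) (Fin n) ℝ) with hV
  have hVV : V * V.transpose = 1 := by
    have := Unitary.coe_mul_star_self hM.eigenvectorUnitary
    simpa [Matrix.star_eq_conjTranspose, Matrix.conjTranspose_eq_transpose_of_trivial] using this
  have hspec : M = V * Matrix.diagonal hM.eigenvalues * V.transpose := by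
    have := hM.spectral_theorem
    rw [Unitary.conjStarAlgAut_apply] at this
    simpa [Matrix.star_eq_conjTranspose, Matrix.conjTranspose_eq_transpose_of_trivial,
      Function.comp_def] using this
  have hmove : ∀ w u : Fin n → ℝ, w ⬝ᵥ (V.mulVec u) = (V.transpose.mulVec w) ⬝ᵥ u := by
    intro w u
    rw [Matrix.dotProduct_mulVec, Matrix.mulVec_transpose]
  refine ⟨V.transpose, hM.eigenvalues, ?_, ?_, ?_⟩
  · intro w
    have h1 : M.mulVec w
        = V.mulVec ((Matrix.diagonal hM.eigenvalues).mulVec (V.transpose.mulVec w)) := by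
      rw [Matrix.mulVec_mulVec, Matrix.mulVec_mulVec, ← hspec]
    rw [h1, hmove]
    simp only [dotProduct, Matrix.mulVec_diagonal]
    exact Finset.sum_congr rfl fun i _ => by ring
  · intro w
    have h1 : w ⬝ᵥ w = w ⬝ᵥ (V.mulVec (V.transpose.mulVec w)) := by
      rw [Matrix.mulVec_mulVec, hVV, Matrix.one_mulVec]
    rw [hmove] at h1
    simpa [dotProduct, ← pow_two] using h1
  · intro E
    unfold countEigLE
    rw [hM.roots_charpoly_eq_eigenvalues, Multiset.filter_map, Multiset.card_map]
    rfl

/-- If `B ≥ A + t` as quadratic forms on the vectors vanishing on `S`, then `B` has at most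
`S.card` more eigenvalues in `(-∞, E + t]` than `A` has in `(-∞, E]`. Otherwise a dimension count
gives a nonzero vector vanishing on `S`, in the span of the eigenvectors of `B` with eigenvalue
`≤ E + t`, and in the span of those of `A` with eigenvalue `> E`. -/
lemma countEigLE_le_add_card {n : ℕ} {A B : Matrix (Fin n) (Fin n) ℝ}
    (hA : A.IsHermitian) (hB : B.IsHermitian) (S : Finset (Fin n)) (E t : ℝ)
    (hdiag : ∀ i, i ∉ S → A i i + t ≤ B i i)
    (hoff : ∀ i j, i ∉ S → j ∉ S → i ≠ j → B i j = A i j) :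
    countEigLE B (E + t) ≤ countEigLE A E + S.card := by
  classical
  obtain ⟨UA, a, hAq, hAn, hAc⟩ := exists_diag hA
  obtain ⟨UB, b, hBq, hBn, hBc⟩ := exists_diag hB
  by_contra! hlt
  rw [hAc, hBc] at hlt
  let L : (Fin n → ℝ) →ₗ[ℝ]
      (({i // ¬ b i ≤ E + t} → ℝ) × ({i // a i ≤ E} → ℝ) × ({i // i ∈ S} → ℝ)) :=
    ((LinearMap.funLeft ℝ ℝ (Subtype.val : {i // ¬ b i ≤ E + t} → Fin n)).comp
        UB.mulVecLin).prod
      (((LinearMap.funLeft ℝ ℝ (Subtype.val : {i // a i ≤ E} → Fin n)).comp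
        UA.mulVecLin).prod
      (LinearMap.funLeft ℝ ℝ (Subtype.val : {i // i ∈ S} → Fin n)))
  have hker : L.ker ≠ ⊥ := by
    apply LinearMap.ker_ne_bot_of_finrank_lt
    have h1 := Finset.card_filter_add_card_filter_not (s := (Finset.univ : Finset (Fin n)))
      (fun i => b i ≤ E + t)
    simp only [Module.finrank_prod, Module.finrank_fintype_fun_eq_card, Fintype.card_subtype,
      Fintype.card_fin, Finset.card_univ, Finset.filter_univ_mem] at h1 ⊢
    omega
  obtain ⟨w, hw, hw0⟩ := (Submodule.ne_bot_iff _).1 hker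
  have hL : L w = 0 := hw
  have hwB : ∀ i, ¬ b i ≤ E + t → UB.mulVec w i = 0 := fun i hi =>
    congrFun (congrArg Prod.fst hL) ⟨i, hi⟩
  have hwA : ∀ i, a i ≤ E → UA.mulVec w i = 0 := fun i hi =>
    congrFun (congrArg (fun p => p.2.1) hL) ⟨i, hi⟩
  have hwS : ∀ i, i ∈ S → w i = 0 := fun i hi =>
    congrFun (congrArg (fun p => p.2.2) hL) ⟨i, hi⟩
  have hpos : 0 < ∑ i, (w i) ^ 2 := by
    obtain ⟨i, hi⟩ := Function.ne_iff.1 hw0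
    exact Finset.sum_pos' (fun i _ => sq_nonneg _) ⟨i, Finset.mem_univ i, by
      have : w i ≠ 0 := hi
      positivity⟩
  have hBle : w ⬝ᵥ (B.mulVec w) ≤ (E + t) * ∑ i, (w i) ^ 2 := by
    rw [hBq, hBn, Finset.mul_sum]
    refine Finset.sum_le_sum fun i _ => ?_
    by_cases hi : b i ≤ E + t
    · exact mul_le_mul_of_nonneg_right hi (sq_nonneg _)
    · simp [hwB i hi]
  have hAgt : E * ∑ i, (w i) ^ 2 < w ⬝ᵥ (A.mulVec w) := by
    have hpos' := hpos
    rw [hAn] at hpos'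
    obtain ⟨k, -, hk⟩ := Finset.exists_lt_of_sum_lt (s := Finset.univ) (f := fun _ : Fin n => (0:ℝ))
      (g := fun i => (UA.mulVec w i) ^ 2) (by simpa using hpos')
    rw [hAq, hAn, Finset.mul_sum]
    refine Finset.sum_lt_sum (fun i _ => ?_) ⟨k, Finset.mem_univ k, ?_⟩
    · by_cases hi : a i ≤ E
      · simp [hwA i hi]
      · exact mul_le_mul_of_nonneg_right (not_le.1 hi).le (sq_nonneg _)
    · have hk' : ¬ a k ≤ E := fun h => by simp [hwA k h] at hk
      exact mul_lt_mul_of_pos_right (not_le.1 hk') hk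
  have hcmp : w ⬝ᵥ (A.mulVec w) + t * ∑ i, (w i) ^ 2 ≤ w ⬝ᵥ (B.mulVec w) := by
    rw [quadForm_eq, quadForm_eq, Finset.mul_sum, ← Finset.sum_add_distrib]
    refine Finset.sum_le_sum fun i _ => ?_
    have : t * w i ^ 2 = ∑ j, if i = j then t * w i ^ 2 else 0 := by simp
    rw [this, ← Finset.sum_add_distrib]
    refine Finset.sum_le_sum fun j _ => ?_
    by_cases hi : i ∈ S
    · simp [hwS i hi]
    by_cases hj : j ∈ S
    · have : i ≠ j := fun h => hi (h ▸ hj)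
      simp [hwS j hj, this]
    by_cases hij : i = j
    · subst hij
      simp only [if_true]
      nlinarith [mul_le_mul_of_nonneg_left (hdiag i hi) (sq_nonneg (w i))]
    · simp [hij, hoff i j hi hj hij]
  linarith

/-! ### The periodic restrictions -/

/-- For distinct sites of `{0, …, n-1}`, being cyclic neighbours means being consecutive or being
the two end sites. -/
lemma cyclic_adj_iff {n i j : ℕ} (hi : i < n) (hj : j < n) :
    (j = (i + 1) % n ∨ j = (i + n - 1) % n) ↔
      (j = i + 1 ∨ i = j + 1 ∨ (i = 0 ∧ j + 1 = n) ∨ (j = 0 ∧ i + 1 = n)) := by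
  have h1 : (i + 1) % n = if i + 1 = n then 0 else i + 1 := by
    split_ifs with h
    · rw [h, Nat.mod_self]
    · exact Nat.mod_eq_of_lt (by omega)
  have h2 : (i + n - 1) % n = if i = 0 then n - 1 else i - 1 := by
    split_ifs with h
    · subst h
      rw [Nat.zero_add]
      exact Nat.mod_eq_of_lt (by omega)
    · rw [show i + n - 1 = (i - 1) + n by omega, Nat.add_mod_right]
      exact Nat.mod_eq_of_lt (by omega)
  rw [h1, h2]
  split_ifs <;> omega

lemma periodicMat_diag (lam : ℝ) (v : ℝ → ℝ) (α : ℝ) (n : ℕ) (x : ℝ) (i : Fin n) :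
    periodicMat lam v α n x i i = lam * v (x + ((i : ℕ) : ℝ) * α) := by
  simp [periodicMat]

lemma periodicMat_off (lam : ℝ) (v : ℝ → ℝ) (α : ℝ) (n : ℕ) (x : ℝ) {i j : Fin n} (h : i ≠ j) :
    periodicMat lam v α n x i j =
      if ((j : ℕ) = i + 1 ∨ (i : ℕ) = j + 1 ∨ ((i : ℕ) = 0 ∧ (j : ℕ) + 1 = n) ∨
        ((j : ℕ) = 0 ∧ (i : ℕ) + 1 = n)) then 1 else 0 := by
  simp only [periodicMat, if_neg h, cyclic_adj_iff i.2 j.2]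

lemma periodicMat_isHermitian (lam : ℝ) (v : ℝ → ℝ) (α : ℝ) (n : ℕ) (x : ℝ) :
    (periodicMat lam v α n x).IsHermitian := by
  refine Matrix.IsHermitian.ext fun i j => ?_
  by_cases h : i = j
  · subst h; simp
  · rw [periodicMat_off _ _ _ _ _ h, periodicMat_off _ _ _ _ _ (Ne.symm h), star_trivial]
    congr 1
    apply propext
    omega

/-- Splitting a box of length `n + m` into two boxes changes the counting function by at most `2`:
on vectors vanishing at the first site of each block the two quadratic forms agree. -/
lemma count_subadd (lam : ℝ) (v : ℝ → ℝ) (α : ℝ) (n m : ℕ) (x E : ℝ) :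
    countEigLE (periodicMat lam v α (n + m) x) E ≤
      countEigLE (periodicMat lam v α n x) E +
        countEigLE (periodicMat lam v α m (x + n * α)) E + 2 := by
  classical
  set P := periodicMat lam v α n x with hP
  set Q := periodicMat lam v α m (x + n * α) with hQ
  set A : Matrix (Fin (n + m)) (Fin (n + m)) ℝ :=
    Matrix.reindex finSumFinEquiv finSumFinEquiv (Matrix.fromBlocks P 0 0 Q) with hAdef
  have hAc : countEigLE A E = countEigLE P E + countEigLE Q E := by
    unfold countEigLE
    rw [hAdef, Matrix.charpoly_reindex, Matrix.charpoly_fromBlocks_zero₁₂, Polynomial.roots_mul,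
      Multiset.filter_add, Multiset.card_add]
    exact mul_ne_zero (Matrix.charpoly_monic _).ne_zero (Matrix.charpoly_monic _).ne_zero
  have hA : A.IsHermitian := by
    rw [hAdef, Matrix.reindex_apply]
    refine Matrix.IsHermitian.submatrix ?_ _
    exact Matrix.IsHermitian.fromBlocks (periodicMat_isHermitian _ _ _ _ _) (by simp)
      (periodicMat_isHermitian _ _ _ _ _)
  set S : Finset (Fin (n + m)) :=
    Finset.univ.filter (fun i => (i : ℕ) = 0 ∨ (i : ℕ) = n) with hS
  have hScard : S.card ≤ 2 := by
    have h1 : S.card = (S.image (fun i : Fin (n + m) => (i : ℕ))).card :=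
      (Finset.card_image_of_injective _ Fin.val_injective).symm
    rw [h1]
    refine (Finset.card_le_card (t := {0, n}) ?_).trans Finset.card_le_two
    intro k hk
    obtain ⟨i, hi, rfl⟩ := Finset.mem_image.1 hk
    simpa [hS] using hi
  have hAentry : ∀ i j : Fin n ⊕ Fin m, A (finSumFinEquiv i) (finSumFinEquiv j) =
      Matrix.fromBlocks P 0 0 Q i j := by
    intro i j
    simp [hAdef]
  have key := countEigLE_le_add_card hA (periodicMat_isHermitian lam v α (n + m) x) S E 0 ?_ ?_
  · rw [add_zero, hAc] at key
    omega
  · intro i _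
    obtain ⟨i, rfl⟩ := finSumFinEquiv.surjective i
    rw [hAentry, periodicMat_diag]
    rcases i with i | i
    · simp [hP, periodicMat_diag]
    · simp only [Matrix.fromBlocks_apply₂₂, hQ, periodicMat_diag, finSumFinEquiv_apply_right,
        Fin.val_natAdd, add_zero]
      apply le_of_eq
      congr 2
      push_cast
      ring
  · intro i j hi hj hij
    obtain ⟨i, rfl⟩ := finSumFinEquiv.surjective i
    obtain ⟨j, rfl⟩ := finSumFinEquiv.surjective j
    rw [hAentry, periodicMat_off _ _ _ _ _ hij]
    rcases i with i | i <;> rcases j with j | j <;>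
      simp [hS] at hi hj hij ⊢
    · rw [hP, periodicMat_off _ _ _ _ _ hij]
      have := i.2
      have := j.2
      congr 1
      apply propext
      omega
    · have := i.2
      have := j.2
      omega
    · have := i.2
      have := j.2
      omega
    · rw [hQ, periodicMat_off _ _ _ _ _ hij]
      have := i.2
      have := j.2
      congr 1
      apply propext
      omega

/-! ### Monotonicity in the phase -/

/-- The sum of `⌊x + iα⌋` over the sites `i < n`. Its increment from `x` to `y ≥ x` is the total
number of integers crossed by the points `x + iα` on the way to `y + iα`. -/
def floorSum (α : ℝ) (n : ℕ) (x : ℝ) : ℝ := ∑ i : Fin n, (⌊x + ((i : ℕ) : ℝ) * α⌋ : ℝ)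

lemma eq_apply_fract (v : ℝ → ℝ) (hper : ∀ x : ℝ, v (x + 1) = v x) (x : ℝ) : v x = v (Int.fract x) := by
  have h : Function.Periodic v 1 := hper
  have := h.sub_int_mul_eq ⌊x⌋ (x := x)
  rw [mul_one] at this
  exact this.symm

/-- Moving the phase by `δ` raises the potential by at least `γm * δ` except at sites where the
argument crosses an integer. Hence raising the energy by `lam * γm * δ` gains at most as many
eigenvalues as there are crossings. -/
lemma count_shift (α lam γm : ℝ) (v : ℝ → ℝ) (hlam : 0 < lam)
    (hper : ∀ x : ℝ, v (x + 1) = v x)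
    (hmono : ∀ x y : ℝ, 0 ≤ x → x ≤ y → y < 1 → γm * (y - x) ≤ v y - v x)
    (n : ℕ) (x δ E : ℝ) (hδ : 0 ≤ δ) :
    (countEigLE (periodicMat lam v α n (x + δ)) (E + lam * γm * δ) : ℝ) ≤
      countEigLE (periodicMat lam v α n x) E + (floorSum α n (x + δ) - floorSum α n x) := by
  classical
  set S : Finset (Fin n) := Finset.univ.filter
    (fun i => ⌊x + δ + ((i : ℕ) : ℝ) * α⌋ ≠ ⌊x + ((i : ℕ) : ℝ) * α⌋) with hS
  have key := countEigLE_le_add_card (periodicMat_isHermitian lam v α n x)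
    (periodicMat_isHermitian lam v α n (x + δ)) S E (lam * γm * δ) ?_ ?_
  · have hScard : (S.card : ℝ) ≤ floorSum α n (x + δ) - floorSum α n x := by
      unfold floorSum
      rw [← Finset.sum_sub_distrib, Finset.card_filter, Nat.cast_sum]
      refine Finset.sum_le_sum fun i _ => ?_
      have hle : ⌊x + ((i : ℕ) : ℝ) * α⌋ ≤ ⌊x + δ + ((i : ℕ) : ℝ) * α⌋ :=
        Int.floor_le_floor (by linarith)
      split_ifs with h
      · have h1 : ⌊x + ((i : ℕ) : ℝ) * α⌋ + 1 ≤ ⌊x + δ + ((i : ℕ) : ℝ) * α⌋ := by omega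
        have h2 : ((⌊x + ((i : ℕ) : ℝ) * α⌋ : ℝ)) + 1 ≤ ⌊x + δ + ((i : ℕ) : ℝ) * α⌋ := by
          exact_mod_cast h1
        push_cast
        linarith
      · have h2 : ((⌊x + ((i : ℕ) : ℝ) * α⌋ : ℝ)) ≤ ⌊x + δ + ((i : ℕ) : ℝ) * α⌋ := by
          exact_mod_cast hle
        push_cast
        linarith
    have key' : (countEigLE (periodicMat lam v α n (x + δ)) (E + lam * γm * δ) : ℝ) ≤
        countEigLE (periodicMat lam v α n x) E + S.card := by exact_mod_cast key
    linarith
  · intro i hi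
    have hfl : ⌊x + δ + ((i : ℕ) : ℝ) * α⌋ = ⌊x + ((i : ℕ) : ℝ) * α⌋ := by
      simpa [hS] using hi
    rw [periodicMat_diag, periodicMat_diag, eq_apply_fract v hper (x + δ + _), eq_apply_fract v hper (x + _)]
    have hd : Int.fract (x + δ + ((i : ℕ) : ℝ) * α) - Int.fract (x + ((i : ℕ) : ℝ) * α) = δ := by
      unfold Int.fract
      rw [hfl]
      ring
    have := hmono _ _ (Int.fract_nonneg (x + ((i : ℕ) : ℝ) * α)) (by linarith)
      (Int.fract_lt_one (x + δ + ((i : ℕ) : ℝ) * α))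
    rw [hd] at this
    nlinarith
  · intro i j _ _ hij
    rw [periodicMat_off _ _ _ _ _ hij, periodicMat_off _ _ _ _ _ hij]

lemma count_periodic (lam : ℝ) (v : ℝ → ℝ) (α : ℝ) (hper : ∀ x : ℝ, v (x + 1) = v x)
    (n : ℕ) (E : ℝ) :
    Function.Periodic (fun x => (countEigLE (periodicMat lam v α n x) E : ℝ)) 1 := by
  intro x
  have : periodicMat lam v α n (x + 1) = periodicMat lam v α n x := by
    ext i j
    simp only [periodicMat]
    rw [show x + 1 + ((i : ℕ) : ℝ) * α = x + ((i : ℕ) : ℝ) * α + 1 by ring, hper]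
  simp only [this]

lemma integral_shift {f : ℝ → ℝ} (hf : Function.Periodic f 1) (c : ℝ) :
    ∫ x in (0:ℝ)..1, f (x + c) = ∫ x in (0:ℝ)..1, f x := by
  rw [intervalIntegral.integral_comp_add_right (fun x => f x)]
  have := hf.intervalIntegral_add_eq c 0
  rw [zero_add, add_comm 1 c]
  simpa using this

lemma floor_intervalIntegrable (c : ℝ) :
    IntervalIntegrable (fun x : ℝ => (⌊x + c⌋ : ℝ)) volume 0 1 := by
  apply Monotone.intervalIntegrable
  intro x y h
  simp only
  exact_mod_cast Int.floor_le_floor (by linarith)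

lemma floorSum_intervalIntegrable (α : ℝ) (n : ℕ) (δ : ℝ) :
    IntervalIntegrable (fun x => floorSum α n (x + δ)) volume 0 1 := by
  unfold floorSum
  apply Monotone.intervalIntegrable
  intro x y h
  refine Finset.sum_le_sum fun i _ => ?_
  exact_mod_cast Int.floor_le_floor (by linarith)

lemma integral_floor_shift (c : ℝ) :
    ∫ x in (0:ℝ)..1, (⌊x + c⌋ : ℝ) = 1 / 2 + c - ∫ x in (0:ℝ)..1, Int.fract x := by
  have h0 := integral_shift (f := fun x : ℝ => Int.fract x) (fun x => Int.fract_add_one x) c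
  have h1 : ∫ x in (0:ℝ)..1, Int.fract (x + c)
      = (∫ x in (0:ℝ)..1, (x + c)) - ∫ x in (0:ℝ)..1, (⌊x + c⌋ : ℝ) := by
    rw [← intervalIntegral.integral_sub (Continuous.intervalIntegrable (by fun_prop) _ _)
      (floor_intervalIntegrable c)]
    rfl
  have h2 : ∫ x in (0:ℝ)..1, (x + c) = 1 / 2 + c := by
    rw [intervalIntegral.integral_add (Continuous.intervalIntegrable (by fun_prop) _ _)
      (Continuous.intervalIntegrable (by fun_prop) _ _)]
    simp [integral_id]
  linarith

/-- Over one period, each of the `n` sites crosses `δ` integers on average. -/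
lemma integral_floorSum_shift (α : ℝ) (n : ℕ) (δ : ℝ) :
    (∫ x in (0:ℝ)..1, floorSum α n (x + δ)) - ∫ x in (0:ℝ)..1, floorSum α n x = n * δ := by
  have h : ∀ δ : ℝ, ∫ x in (0:ℝ)..1, floorSum α n (x + δ) =
      ∑ i : Fin n, (1 / 2 + (δ + ((i : ℕ) : ℝ) * α) - ∫ x in (0:ℝ)..1, Int.fract x) := by
    intro δ
    unfold floorSum
    simp only [add_assoc _ δ]
    rw [intervalIntegral.integral_finsetSum (fun i _ => floor_intervalIntegrable _)]
    exact Finset.sum_congr rfl fun i _ => integral_floor_shift _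
  have h0 := h 0
  simp only [add_zero] at h0
  rw [h, h0, ← Finset.sum_sub_distrib]
  rw [Finset.sum_congr rfl (g := fun _ => δ) (fun i _ => by ring)]
  simp

/-- The counting function minus `floorSum` is antitone in the phase, hence measurable. -/
lemma count_intervalIntegrable (α lam γm : ℝ) (v : ℝ → ℝ) (hlam : 0 < lam) (hγm : 0 < γm)
    (hper : ∀ x : ℝ, v (x + 1) = v x)
    (hmono : ∀ x y : ℝ, 0 ≤ x → x ≤ y → y < 1 → γm * (y - x) ≤ v y - v x)
    (n : ℕ) (E a b : ℝ) :
    IntervalIntegrable (fun x => (countEigLE (periodicMat lam v α n x) E : ℝ)) volume a b := by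
  have hmono' : ∀ x y : ℝ, 0 ≤ x → x ≤ y → y < 1 → 0 * (y - x) ≤ v y - v x := by
    intro x y h0 hxy h1
    have := hmono x y h0 hxy h1
    have : 0 ≤ γm * (y - x) := mul_nonneg hγm.le (by linarith)
    linarith
  have hanti : Antitone
      (fun x => (countEigLE (periodicMat lam v α n x) E : ℝ) - floorSum α n x) := by
    intro x y hxy
    have := count_shift α lam 0 v hlam hper hmono' n x (y - x) E (by linarith)
    simp only [add_sub_cancel, mul_zero, zero_mul, add_zero] at this
    simp only
    linarith
  have hfl : Monotone (floorSum α n) := by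
    intro x y h
    refine Finset.sum_le_sum fun i _ => ?_
    exact_mod_cast Int.floor_le_floor (by linarith)
  simpa using (hanti.intervalIntegrable (μ := volume) (a := a) (b := b)).add
    (hfl.intervalIntegrable (μ := volume) (a := a) (b := b))

/-! ### The arithmetic constant -/

lemma gaussIter_irrational {α : ℝ} (hα : Irrational α) (k : ℕ) : Irrational (gaussIter α k) := by
  have hfr : ∀ y : ℝ, Irrational y → Irrational (Int.fract y) := fun y hy => by
    unfold Int.fract
    exact hy.sub_intCast _
  induction k with
  | zero => exact hfr _ hα
  | succ k ih =>
    refine hfr _ ?_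
    rw [one_div]
    exact ih.inv

lemma gaussIter_mem {α : ℝ} (hα : Irrational α) (k : ℕ) :
    0 < gaussIter α k ∧ gaussIter α k < 1 := by
  have hne := (gaussIter_irrational hα k).ne_zero
  have : 0 ≤ gaussIter α k ∧ gaussIter α k < 1 := by
    cases k with
    | zero => exact ⟨Int.fract_nonneg _, Int.fract_lt_one _⟩
    | succ k => exact ⟨Int.fract_nonneg _, Int.fract_lt_one _⟩
  exact ⟨lt_of_le_of_ne this.1 hne.symm, this.2⟩

lemma one_le_cfA {α : ℝ} (hα : Irrational α) (k : ℕ) : 1 ≤ cfA α k := by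
  obtain ⟨h0, h1⟩ := gaussIter_mem hα k
  have : (1 : ℤ) ≤ ⌊1 / gaussIter α k⌋ := by
    rw [Int.le_floor]
    push_cast
    exact (one_le_div h0).2 h1.le
  unfold cfA
  omega

lemma cfDen_le_succ {α : ℝ} (hα : Irrational α) (k : ℕ) : cfDen α k ≤ cfDen α (k + 1) := by
  cases k with
  | zero => simpa [cfDen] using one_le_cfA hα 0
  | succ k =>
    have := Nat.mul_le_mul_right (cfDen α (k + 1)) (one_le_cfA hα (k + 1))
    simp only [cfDen] at this ⊢
    omega

lemma two_mul_cfDen_le {α : ℝ} (hα : Irrational α) (k : ℕ) :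
    2 * cfDen α k ≤ cfDen α (k + 2) := by
  have h1 := Nat.mul_le_mul_right (cfDen α (k + 1)) (one_le_cfA hα (k + 1))
  have h2 := cfDen_le_succ hα k
  simp only [cfDen] at h1 ⊢
  omega

lemma cfRho_mem {α : ℝ} (hα : Irrational α) : 0 ≤ cfRho α ∧ cfRho α ≤ 1 / 2 := by
  have h0 : ∀ k, (0:ℝ) ≤ (cfDen α k : ℝ) / (cfDen α (k + 2) : ℝ) := fun k => by positivity
  have h1 : ∀ k, (cfDen α k : ℝ) / (cfDen α (k + 2) : ℝ) ≤ 1 / 2 := fun k => by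
    have h : (2:ℝ) * cfDen α k ≤ cfDen α (k + 2) := by exact_mod_cast two_mul_cfDen_le hα k
    exact div_le_of_le_mul₀ (by positivity) (by norm_num) (by linarith)
  have hb : IsBoundedUnder (· ≥ ·) atTop
      (fun k : ℕ => (cfDen α k : ℝ) / (cfDen α (k + 2) : ℝ)) :=
    isBoundedUnder_of ⟨0, h0⟩
  have hb' : IsBoundedUnder (· ≤ ·) atTop
      (fun k : ℕ => (cfDen α k : ℝ) / (cfDen α (k + 2) : ℝ)) :=
    isBoundedUnder_of ⟨1 / 2, h1⟩
  exact ⟨le_liminf_of_le hb'.isCoboundedUnder_ge (Eventually.of_forall h0),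
    liminf_le_of_frequently_le (Frequently.of_forall h1) hb⟩

/-- the integrated density of states exists and is Lipschitz continuous. -/
theorem ids_exists_and_lipschitz
    (α lam γm γp : ℝ) (v : ℝ → ℝ)
    (hα : Irrational α) (hlam : 0 < lam) (hγm : 0 < γm) (hγp : 0 < γp)
    (hper : ∀ x : ℝ, v (x + 1) = v x) (hv0 : v 0 = 0)
    (hmono : ∀ x y : ℝ, 0 ≤ x → x ≤ y → y < 1 →
      γm * (y - x) ≤ v y - v x ∧ v y - v x ≤ γp * (y - x)) :
    ∃ N : ℝ → ℝ,
      (∀ E : ℝ,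
        Tendsto (fun n : ℕ => (1 / (n : ℝ)) *
            ∫ x in (0:ℝ)..1, (countEigLE (periodicMat lam v α n x) E : ℝ))
          atTop (nhds (N E))) ∧
      ∀ E E' : ℝ, E ≤ E' → N E' - N E ≤ (E' - E) / (lam * (1 - cfRho α) * γm) := by
  have hmono₁ : ∀ x y : ℝ, 0 ≤ x → x ≤ y → y < 1 → γm * (y - x) ≤ v y - v x :=
    fun x y h0 h1 h2 => (hmono x y h0 h1 h2).1
  set I : ℕ → ℝ → ℝ := fun n E =>
    ∫ x in (0:ℝ)..1, (countEigLE (periodicMat lam v α n x) E : ℝ) with hI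
  have hint : ∀ n E a b, IntervalIntegrable
      (fun x => (countEigLE (periodicMat lam v α n x) E : ℝ)) volume a b :=
    fun n E a b => count_intervalIntegrable α lam γm v hlam hγm hper hmono₁ n E a b
  have hint' : ∀ n E c, IntervalIntegrable
      (fun x => (countEigLE (periodicMat lam v α n (x + c)) E : ℝ)) volume 0 1 := by
    intro n E c
    have := (hint n E (0 + c) (1 + c)).comp_add_right c
    simpa using this
  have hI0 : ∀ n E, 0 ≤ I n E := fun n E =>
    intervalIntegral.integral_nonneg zero_le_one fun x _ => Nat.cast_nonneg _
  -- The additive constant absorbs the defect of `count_subadd`.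
  have hsub : ∀ E, Subadditive (fun n => I n E + 2) := by
    intro E n m
    have h1 : I (n + m) E ≤ ∫ x in (0:ℝ)..1, ((countEigLE (periodicMat lam v α n x) E : ℝ) +
        (countEigLE (periodicMat lam v α m (x + n * α)) E : ℝ) + 2) := by
      refine intervalIntegral.integral_mono_on zero_le_one (hint _ _ _ _)
        (((hint _ _ _ _).add (hint' _ _ _)).add intervalIntegrable_const) fun x _ => ?_
      exact_mod_cast count_subadd lam v α n m x E
    rw [intervalIntegral.integral_add ((hint _ _ _ _).add (hint' _ _ _)) intervalIntegrable_const,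
      intervalIntegral.integral_add (hint _ _ _ _) (hint' _ _ _),
      integral_shift (count_periodic lam v α hper m E)] at h1
    simp only [intervalIntegral.integral_const, sub_zero, one_smul] at h1
    change I (n + m) E + 2 ≤ I n E + 2 + (I m E + 2)
    change I (n + m) E ≤ I n E + I m E + 2 at h1
    linarith
  have hlim : ∀ E, Tendsto (fun n : ℕ => (1 / (n : ℝ)) * I n E) atTop (nhds (hsub E).lim) := by
    intro E
    have h1 := (hsub E).tendsto_lim ⟨0, by
      rintro _ ⟨n, rfl⟩
      have := hI0 n E
      simp only
      positivity⟩
    have h2 := h1.sub (tendsto_const_div_atTop_nhds_zero_nat (2:ℝ))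
    rw [sub_zero] at h2
    refine h2.congr fun n => ?_
    ring
  refine ⟨fun E => (hsub E).lim, hlim, fun E E' hEE' => ?_⟩
  obtain ⟨hρ0, hρ1⟩ := cfRho_mem hα
  set δ := (E' - E) / (lam * γm) with hδ
  have hlg : 0 < lam * γm := mul_pos hlam hγm
  have hδ0 : 0 ≤ δ := div_nonneg (by linarith) hlg.le
  have hE' : E + lam * γm * δ = E' := by
    rw [hδ]
    field_simp
    ring
  have hstep : ∀ n, I n E' ≤ I n E + n * δ := by
    intro n
    have h1 : ∫ x in (0:ℝ)..1, (countEigLE (periodicMat lam v α n (x + δ)) E' : ℝ) ≤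
        ∫ x in (0:ℝ)..1, ((countEigLE (periodicMat lam v α n x) E : ℝ) +
          (floorSum α n (x + δ) - floorSum α n x)) := by
      refine intervalIntegral.integral_mono_on zero_le_one (hint' _ _ _)
        ((hint _ _ _ _).add ((floorSum_intervalIntegrable α n δ).sub
          (by simpa using floorSum_intervalIntegrable α n 0))) fun x _ => ?_
      have := count_shift α lam γm v hlam hper hmono₁ n x δ E hδ0
      rwa [hE'] at this
    rw [integral_shift (count_periodic lam v α hper n E'),
      intervalIntegral.integral_add (hint _ _ _ _) ((floorSum_intervalIntegrable α n δ).sub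
          (by simpa using floorSum_intervalIntegrable α n 0)),
      intervalIntegral.integral_sub (floorSum_intervalIntegrable α n δ)
          (by simpa using floorSum_intervalIntegrable α n 0), integral_floorSum_shift] at h1
    exact h1
  have hle : (hsub E').lim - (hsub E).lim ≤ δ := by
    refine le_of_tendsto ((hlim E').sub (hlim E)) ?_
    filter_upwards [eventually_gt_atTop 0] with n hn
    have hn' : (0:ℝ) < n := by exact_mod_cast hn
    rw [← mul_sub, one_div, inv_mul_le_iff₀ hn']
    linarith [hstep n]
  refine hle.trans ?_
  rw [hδ]
  refine div_le_div_of_nonneg_left (by linarith) ?_ ?_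
  · have : 0 < 1 - cfRho α := by linarith
    positivity
  · nlinarith

end
end

section
/- The Lyapunov exponent E ↦ γ(E) is a continuous function on ℝ. -/
/-!
The Lyapunov exponent is an infimum over `n` of the finite-scale averages
`F_n(E) = (1/n) ∫ log ‖M_n(x, E)‖ dx`, which are nonnegative since `det M_n = 1`. So it suffices that
the `F_n` are equicontinuous at every energy (`equicontinuous_finite_scale`).

Up to an error `O(1/n)`, `F_n` may be replaced by the average of `(1/n) log |Q_n(x, E)|`, where
`Q_n = (1, i) · M_n (i, 1)ᵀ`; indeed `|Q_n|² = ‖M_n‖² + 2` on the real axis (`exp_two_re_gLog`).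
Running the Riccati iteration `m ↦ w - 1/m` from `m = i` writes `Q_n` as a product of numbers in the
upper half-plane, also for complex energies `z` with `Im z ≥ 0`. Summing principal logarithms gives
a holomorphic branch of `log Q_n` (`phaseLog`) whose imaginary part is an unwrapped phase. The phase
is monotone in each diagonal entry, and changing a single entry moves it by less than `π`
(`phaseLog_im_ge`).

Moving `x` to `x + h` raises the potential at every site by at least `λ γ₋ h`, except at sites where
a jump of `v` is crossed, which happens with probability `h` at each of the `n` sites. Averaging over
`x` yields a Wegner estimate uniform in the height `Im z` (`avgLog_im_sub_le`): the averaged phase is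
monotone in the energy with Lipschitz constant at most `π n / (λ γ₋)`. By the Cauchy–Riemann
equations the same constant bounds the vertical derivative of the averaged `log |Q_n|`, so the values
at `E` and `E + iη` differ by at most `π n η / (λ γ₋)` (`avgLog_re_vertical`). At the fixed height `η`
the averages divided by `n` are Lipschitz in `E` uniformly in `n`, by Cauchy's estimate
(`avgLog_horizontal`). Choosing `η` first and then `E` close to `E₀` gives equicontinuity.
-/

open MeasureTheory Filter

noncomputable section

/-- The `n`-step transfer matrix `M_n(x,E) = ∏_{l=n-1}^{0} [[E - λ v(x + lα), -1],[1, 0]]`. -/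
noncomputable def transferMat (lam : ℝ) (v : ℝ → ℝ) (α E x : ℝ) :
    ℕ → Matrix (Fin 2) (Fin 2) ℝ
  | 0 => 1
  | n + 1 => !![E - lam * v (x + (n : ℝ) * α), -1; 1, 0] * transferMat lam v α E x n

/-- A norm on 2×2 real matrices (Frobenius/Hilbert-Schmidt norm). -/
noncomputable def matNorm (M : Matrix (Fin 2) (Fin 2) ℝ) : ℝ :=
  Real.sqrt (∑ i, ∑ j, (M i j) ^ 2)

/-- The Lyapunov exponent `γ(E) = inf_{n ≥ 1} (1/n) ∫₀¹ ln ‖M_n(x,E)‖ dx`. -/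
noncomputable def lyap (lam : ℝ) (v : ℝ → ℝ) (α E : ℝ) : ℝ :=
  ⨅ n : ℕ+, (1 / (n : ℝ)) *
    ∫ x in (0:ℝ)..1, Real.log (matNorm (transferMat lam v α E x (n : ℕ)))

/-- A logarithm of `bdryForm n w m 1`, assembled from principal logarithms along the Riccati
iteration `m ↦ w k - m⁻¹`. When `Im (w k) ≥ 0` and `Im m > 0` the iteration stays in the open upper
half-plane, so every logarithm that occurs is continuous and the imaginary part is a genuine
(unwrapped) phase. Recursion peels off the first site and shifts `w`. -/
def phaseLog : ℕ → (ℕ → ℂ) → ℂ → ℂ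
  | 0, _, m => Complex.log (m + Complex.I)
  | n + 1, w, m => Complex.log m + phaseLog n (fun k => w (k + 1)) (w 0 - m⁻¹)

/-- The linear form `(1, i) · A_{n-1} ⋯ A_0 (a, b)ᵀ` with `A_k = [[w k, -1], [1, 0]]`. -/
def bdryForm : ℕ → (ℕ → ℂ) → ℂ → ℂ → ℂ
  | 0, _, a, b => a + Complex.I * b
  | n + 1, w, a, b => bdryForm n (fun k => w (k + 1)) (w 0 * a - b) a

/-! ### Arguments of points in the upper half-plane -/

lemma im_neg_inv_pos {m : ℂ} (hm : 0 < m.im) : 0 < (-m⁻¹).im := by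
  have : m ≠ 0 := by rintro rfl; simp at hm
  simp only [Complex.neg_im, Complex.inv_im]
  have h := Complex.normSq_pos.2 this
  rw [neg_div, neg_neg]; positivity

lemma im_step_pos {w m : ℂ} (hw : 0 ≤ w.im) (hm : 0 < m.im) : 0 < (w - m⁻¹).im := by
  have := im_neg_inv_pos hm
  simp only [Complex.neg_im, Complex.sub_im] at *
  linarith

lemma ne_zero_of_im_pos {m : ℂ} (hm : 0 < m.im) : m ≠ 0 := by
  rintro rfl; simp at hm

lemma arg_pos_of_im_pos {m : ℂ} (hm : 0 < m.im) : 0 < m.arg := by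
  refine lt_of_le_of_ne (Complex.arg_nonneg_iff.2 hm.le) fun h => ?_
  exact hm.ne' (Complex.arg_eq_zero_iff.1 h.symm).2

lemma arg_lt_pi_of_im_pos {m : ℂ} (hm : 0 < m.im) : m.arg < Real.pi :=
  Complex.arg_lt_pi_iff.2 (Or.inr hm.ne')

/-- Two factorizations of the same number into factors of the closed upper half-plane have the same
sum of principal arguments: both sums lie in `(0, 2π)` and agree modulo `2π`. -/
lemma arg_add_arg_eq {a b c d : ℂ} (ha : 0 < a.im) (hb : 0 ≤ b.im) (hb0 : b ≠ 0)
    (hc : 0 < c.im) (hd : 0 ≤ d.im) (hd0 : d ≠ 0) (h : a * b = c * d) :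
    a.arg + b.arg = c.arg + d.arg := by
  have ha0 := ne_zero_of_im_pos ha
  have hc0 := ne_zero_of_im_pos hc
  have e : ((a.arg + b.arg : ℝ) : Real.Angle) = ((c.arg + d.arg : ℝ) : Real.Angle) := by
    rw [Real.Angle.coe_add, Real.Angle.coe_add, ← Complex.arg_mul_coe_angle ha0 hb0,
      ← Complex.arg_mul_coe_angle hc0 hd0, h]
  obtain ⟨k, hk⟩ := Real.Angle.angle_eq_iff_two_pi_dvd_sub.1 e
  have h1 := arg_pos_of_im_pos ha
  have h2 := arg_lt_pi_of_im_pos ha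
  have h3 := arg_pos_of_im_pos hc
  have h4 := arg_lt_pi_of_im_pos hc
  have h5 := Complex.arg_nonneg_iff.2 hb
  have h6 := Complex.arg_le_pi b
  have h7 := Complex.arg_nonneg_iff.2 hd
  have h8 := Complex.arg_le_pi d
  have hp := Real.pi_pos
  have k1 : (k : ℝ) < 1 := by
    by_contra! hh
    nlinarith
  have k2 : (-1 : ℝ) < k := by
    by_contra! hh
    nlinarith
  have k0 : k = 0 := by
    have : k < 1 := by exact_mod_cast k1
    have : -1 < k := by exact_mod_cast k2
    omega
  rw [k0] at hk
  simp at hk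
  linarith

lemma arg_le_arg_sub {z : ℂ} (hz : 0 < z.im) {s : ℝ} (hs : 0 ≤ s) :
    z.arg ≤ (z - s).arg := by
  have hz0 := ne_zero_of_im_pos hz
  have hzs : 0 < (z - s).im := by simpa using hz
  have hi : 0 ≤ (1 - s * z⁻¹).im := by
    have := im_neg_inv_pos hz
    simp only [Complex.neg_im] at this
    simp only [Complex.sub_im, Complex.one_im, Complex.im_ofReal_mul]
    nlinarith
  have hm : z * (1 - s * z⁻¹) = (z - s) * 1 := by field_simp
  have h0 : (1 - s * z⁻¹) ≠ 0 := by
    intro h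
    rw [h, mul_zero, mul_one] at hm
    exact ne_zero_of_im_pos hzs hm.symm
  have := arg_add_arg_eq hz hi h0 hzs (by simp) one_ne_zero hm
  have h2 := Complex.arg_nonneg_iff.2 hi
  simp only [Complex.arg_one, add_zero] at this
  linarith

/-! ### The unwrapped phase as a function of the site values -/

/-- The phase depends on the initial point `m` only through one principal argument. In particular
changing `m` changes the phase by less than `π`: this is the rank-one perturbation bound. -/
lemma phaseLog_im_eq (n : ℕ) : ∀ w : ℕ → ℂ, (∀ k, 0 ≤ (w k).im) →
    ∃ (κ : ℝ) (ζ : ℂ), 0 < ζ.im ∧ ∀ m : ℂ, 0 < m.im →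
      (phaseLog n w m).im = κ + (m + ζ).arg := by
  induction n with
  | zero =>
    intro w _
    exact ⟨0, Complex.I, by simp, fun m _ => by simp [phaseLog, Complex.log_im]⟩
  | succ n ih =>
    intro w hw
    obtain ⟨κ, ζ, hζ, h⟩ := ih (fun k => w (k + 1)) (fun k => hw (k + 1))
    have hwζ : 0 < (w 0 + ζ).im := by
      rw [Complex.add_im]; linarith [hw 0]
    refine ⟨κ + (w 0 + ζ).arg, -(w 0 + ζ)⁻¹, im_neg_inv_pos hwζ, fun m hm => ?_⟩
    have hs := im_step_pos (hw 0) hm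
    have hm0 := ne_zero_of_im_pos hm
    have hz0 := ne_zero_of_im_pos hwζ
    have h1 : 0 < (w 0 - m⁻¹ + ζ).im := by rw [Complex.add_im]; linarith
    have h2 : 0 < (m + -(w 0 + ζ)⁻¹).im := by
      rw [Complex.add_im]; linarith [im_neg_inv_pos hwζ]
    have := arg_add_arg_eq hm h1.le (ne_zero_of_im_pos h1) hwζ h2.le (ne_zero_of_im_pos h2)
      (by field_simp; ring)
    rw [phaseLog, Complex.add_im, h _ hs, Complex.log_im]
    linarith

/-- Lowering the site values by real amounts raises the phase, and an arbitrary change of the value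
at one site lowers it by at most `π`. The weight `p k` marks the sites changed arbitrarily. -/
lemma phaseLog_im_ge (n : ℕ) : ∀ (w w' : ℕ → ℂ) (p : ℕ → ℝ),
    (∀ k, 0 ≤ (w k).im) → (∀ k, 0 ≤ (w' k).im) → (∀ k, 0 ≤ p k) →
    (∀ k, 1 ≤ p k ∨ ∃ s : ℝ, 0 ≤ s ∧ w' k = w k - s) →
    ∀ m : ℂ, 0 < m.im →
      (phaseLog n w m).im - Real.pi * ∑ k ∈ Finset.range n, p k ≤ (phaseLog n w' m).im := by
  induction n with
  | zero => intro w w' p _ _ _ _ m _; simp [phaseLog]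
  | succ n ih =>
    intro w w' p hw hw' hp0 hp m hm
    have h1 := ih (fun k => w (k + 1)) (fun k => w' (k + 1)) (fun k => p (k + 1))
      (fun k => hw _) (fun k => hw' _) (fun k => hp0 _) (fun k => hp _) _ (im_step_pos (hw' 0) hm)
    obtain ⟨κ, ζ, hζ, h⟩ := phaseLog_im_eq n (fun k => w (k + 1)) (fun k => hw _)
    rw [h _ (im_step_pos (hw' 0) hm)] at h1
    rw [phaseLog, phaseLog, Complex.add_im, Complex.add_im, h _ (im_step_pos (hw 0) hm),
      Finset.sum_range_succ', mul_add]
    have hi1 : 0 < (w 0 - m⁻¹ + ζ).im := by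
      rw [Complex.add_im]; linarith [im_step_pos (hw 0) hm]
    have hi2 : 0 < (w' 0 - m⁻¹ + ζ).im := by
      rw [Complex.add_im]; linarith [im_step_pos (hw' 0) hm]
    have key : (w 0 - m⁻¹ + ζ).arg - Real.pi * p 0 ≤ (w' 0 - m⁻¹ + ζ).arg := by
      have := Real.pi_pos
      rcases hp 0 with h | ⟨s, hs, e⟩
      · have := arg_lt_pi_of_im_pos hi1
        have := arg_pos_of_im_pos hi2
        nlinarith
      · have := arg_le_arg_sub hi1 hs
        rw [e, show w 0 - (s : ℂ) - m⁻¹ + ζ = w 0 - m⁻¹ + ζ - s by ring]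
        nlinarith [hp0 0]
    linarith

lemma bdryForm_smul (n : ℕ) : ∀ (w : ℕ → ℂ) (c a b : ℂ),
    bdryForm n w (c * a) (c * b) = c * bdryForm n w a b := by
  induction n with
  | zero => intro w c a b; simp only [bdryForm]; ring
  | succ n ih =>
    intro w c a b
    rw [bdryForm, bdryForm, ← ih]
    congr 1; ring

lemma exp_phaseLog (n : ℕ) : ∀ (w : ℕ → ℂ), (∀ k, 0 ≤ (w k).im) → ∀ m : ℂ, 0 < m.im →
    Complex.exp (phaseLog n w m) = bdryForm n w m 1 := by
  induction n with
  | zero =>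
    intro w _ m hm
    rw [phaseLog, bdryForm, mul_one, Complex.exp_log]
    exact ne_zero_of_im_pos (by rw [Complex.add_im, Complex.I_im]; linarith)
  | succ n ih =>
    intro w hw m hm
    have hm0 := ne_zero_of_im_pos hm
    rw [phaseLog, bdryForm, Complex.exp_add, Complex.exp_log hm0,
      ih _ (fun k => hw _) _ (im_step_pos (hw 0) hm), ← bdryForm_smul]
    congr 1
    · field_simp
    · ring

/-! ### Regularity and bounds for the logarithm -/

lemma measurable_phaseLog (n : ℕ) : ∀ (w : ℝ → ℕ → ℂ) (m : ℝ → ℂ),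
    (∀ k, Measurable fun x => w x k) → Measurable m →
    Measurable fun x => phaseLog n (w x) (m x) := by
  induction n with
  | zero => intro w m _ hm; exact (hm.add_const _).clog
  | succ n ih =>
    intro w m hw hm
    exact hm.clog.add (ih (fun x k => w x (k + 1)) _ (fun k => hw _) ((hw 0).sub hm.inv))

lemma differentiableAt_phaseLog (n : ℕ) : ∀ (w : ℂ → ℕ → ℂ) (m : ℂ → ℂ) (z : ℂ),
    (∀ k, DifferentiableAt ℂ (fun z => w z k) z) → DifferentiableAt ℂ m z →
    (∀ k, 0 ≤ (w z k).im) → 0 < (m z).im →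
    DifferentiableAt ℂ (fun z => phaseLog n (w z) (m z)) z := by
  induction n with
  | zero =>
    intro w m z _ hm _ hmi
    refine (hm.add_const _).clog (Or.inr ?_)
    rw [Complex.add_im, Complex.I_im]; linarith
  | succ n ih =>
    intro w m z hw hm hwi hmi
    refine (hm.clog (Or.inr hmi.ne')).add
      (ih (fun z k => w z (k + 1)) (fun z => w z 0 - (m z)⁻¹) z (fun k => hw _)
        ((hw 0).sub (hm.inv (ne_zero_of_im_pos hmi))) (fun k => hwi _) (im_step_pos (hwi 0) hmi))

lemma norm_log_le {m : ℂ} {r R : ℝ} (hr : 0 < r) (h1 : r ≤ ‖m‖) (h2 : ‖m‖ ≤ R) :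
    ‖Complex.log m‖ ≤ |Real.log r| + |Real.log R| + Real.pi := by
  refine (Complex.norm_le_abs_re_add_abs_im _).trans ?_
  rw [Complex.log_re, Complex.log_im]
  have a := Complex.abs_arg_le_pi m
  have b := Real.log_le_log hr h1
  have c := Real.log_le_log (hr.trans_le h1) h2
  have : |Real.log ‖m‖| ≤ |Real.log r| + |Real.log R| := by
    rw [abs_le]
    constructor <;>
    linarith [neg_abs_le (Real.log r), le_abs_self (Real.log R), abs_nonneg (Real.log R), abs_nonneg (Real.log r)]
  linarith

lemma norm_inv_le_of_im {m : ℂ} {r : ℝ} (hr : 0 < r) (h : r ≤ m.im) : ‖m⁻¹‖ ≤ r⁻¹ := by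
  rw [norm_inv]
  exact inv_anti₀ hr (h.trans ((le_abs_self _).trans (Complex.abs_im_le_norm m)))

/-- At positive height `η` the logarithm grows linearly in `n`, with a constant depending only on
`η` and on a bound `ρ` for the site values. -/
lemma norm_phaseLog_le {η ρ : ℝ} (hη : 0 < η) (n : ℕ) : ∀ w : ℕ → ℂ,
    (∀ k, η ≤ (w k).im) → (∀ k, ‖w k‖ ≤ ρ) → ∀ m : ℂ, η ≤ m.im → ‖m‖ ≤ ρ + η⁻¹ + 1 →
    ‖phaseLog n w m‖ ≤ (n + 1) * (|Real.log η| + |Real.log (ρ + η⁻¹ + 2)| + Real.pi) := by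
  have him : ∀ m : ℂ, m.im ≤ ‖m‖ := fun m => (le_abs_self _).trans (Complex.abs_im_le_norm m)
  induction n with
  | zero =>
    intro w hw hw' m hm hm'
    rw [phaseLog]
    have h1 : η ≤ ‖m + Complex.I‖ := by
      refine le_trans ?_ (him _)
      rw [Complex.add_im, Complex.I_im]; linarith
    have h2 : ‖m + Complex.I‖ ≤ ρ + η⁻¹ + 2 := by
      refine (norm_add_le _ _).trans ?_
      rw [Complex.norm_I]; linarith
    simpa using norm_log_le hη h1 h2
  | succ n ih =>
    intro w hw hw' m hm hm'
    rw [phaseLog]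
    refine (norm_add_le _ _).trans ?_
    have h1 := norm_log_le hη (hm.trans (him m)) (hm'.trans (by linarith : _ ≤ ρ + η⁻¹ + 2))
    have h2 := ih (fun k => w (k + 1)) (fun k => hw _) (fun k => hw' _) (w 0 - m⁻¹)
      (by
        have := im_neg_inv_pos (hη.trans_le hm)
        rw [Complex.neg_im] at this
        rw [Complex.sub_im]
        linarith [hw 0])
      (by
        refine (norm_sub_le _ _).trans ?_
        linarith [hw' 0, norm_inv_le_of_im hη hm])
    push_cast
    linarith

/-- A bound valid up to real site values, with a constant depending on `n`. -/
lemma exists_norm_phaseLog_le (ρ : ℝ) (n : ℕ) : ∀ r R : ℝ, 0 < r →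
    ∃ C : ℝ, ∀ w : ℕ → ℂ, (∀ k, 0 ≤ (w k).im) → (∀ k, ‖w k‖ ≤ ρ) → ∀ m : ℂ,
      r ≤ m.im → ‖m‖ ≤ R → ‖phaseLog n w m‖ ≤ C := by
  have him : ∀ m : ℂ, m.im ≤ ‖m‖ := fun m => (le_abs_self _).trans (Complex.abs_im_le_norm m)
  induction n with
  | zero =>
    intro r R hr
    refine ⟨_, fun w _ _ m hm hm' => norm_log_le (r := r) (R := R + 1) hr ?_ ?_⟩
    · refine le_trans ?_ (him _)
      rw [Complex.add_im, Complex.I_im]; linarith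
    · refine (norm_add_le _ _).trans ?_
      rw [Complex.norm_I]; linarith
  | succ n ih =>
    intro r R hr
    by_cases hR : 0 < R
    · obtain ⟨C, hC⟩ := ih (r / R ^ 2) (ρ + r⁻¹) (by positivity)
      refine ⟨_, fun w hw hw' m hm hm' => (norm_add_le _ _).trans
        (add_le_add (norm_log_le hr (hm.trans (him m)) hm')
          (hC (fun k => w (k + 1)) (fun k => hw _) (fun k => hw' _) _ ?_ ?_))⟩
      · rw [Complex.sub_im, Complex.inv_im, neg_div, sub_neg_eq_add]
        have h0 : 0 < Complex.normSq m :=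
          Complex.normSq_pos.2 (ne_zero_of_im_pos (hr.trans_le hm))
        have h1 : Complex.normSq m ≤ R ^ 2 := by
          rw [Complex.normSq_eq_norm_sq]; gcongr
        have : r / R ^ 2 ≤ m.im / Complex.normSq m := by gcongr; linarith
        linarith [hw 0]
      · refine (norm_sub_le _ _).trans ?_
        linarith [hw' 0, norm_inv_le_of_im hr hm]
    · refine ⟨0, fun w hw hw' m hm hm' => ?_⟩
      linarith [him m]

/-! ### The averaged logarithm -/

/-- The properties of `q = λ v` used below: a bounded, measurable, `1`-periodic function whose
increments inside a period `[k, k + 1)` are at least `c` times the step. -/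
structure GoodPotential (q : ℝ → ℝ) (B c : ℝ) : Prop where
  meas : Measurable q
  nonneg : ∀ x, 0 ≤ q x
  le : ∀ x, q x ≤ B
  periodic : ∀ x, q (x + 1) = q x
  incr : ∀ x h : ℝ, 0 ≤ h → Int.fract x + h < 1 → c * h ≤ q (x + h) - q x

/-- The values `z - q (x + k α)` on the diagonal of `z - H`. -/
def siteSeq (q : ℝ → ℝ) (α : ℝ) (z : ℂ) (x : ℝ) (k : ℕ) : ℂ := z - (q (x + k * α) : ℝ)

/-- The logarithm of `(1, i) · M_n(x, z) (i, 1)ᵀ`. For real `z` the modulus of that number is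
`√(‖M_n‖² + 2)`, see `exp_two_re_gLog`. -/
def gLog (q : ℝ → ℝ) (α : ℝ) (n : ℕ) (z : ℂ) (x : ℝ) : ℂ :=
  phaseLog n (siteSeq q α z x) Complex.I

/-- The average of `gLog` over the phase `x`. -/
def avgLog (q : ℝ → ℝ) (α : ℝ) (n : ℕ) (z : ℂ) : ℂ := ∫ x in (0:ℝ)..1, gLog q α n z x

section
variable {q : ℝ → ℝ} {B c : ℝ} (α : ℝ) (n : ℕ)

lemma siteSeq_im (z : ℂ) (x : ℝ) (k : ℕ) : (siteSeq q α z x k).im = z.im := by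
  simp [siteSeq]

lemma norm_siteSeq_le (hq : GoodPotential q B c) (z : ℂ) (x : ℝ) (k : ℕ) :
    ‖siteSeq q α z x k‖ ≤ ‖z‖ + B := by
  refine (norm_sub_le _ _).trans ?_
  rw [Complex.norm_real, Real.norm_eq_abs, abs_of_nonneg (hq.nonneg _)]
  linarith [hq.le (x + k * α)]

lemma measurable_gLog (hq : GoodPotential q B c) (z : ℂ) : Measurable (gLog q α n z) := by
  refine measurable_phaseLog n _ _ (fun k => ?_) measurable_const
  have := hq.meas
  unfold siteSeq
  fun_prop

lemma gLog_periodic (hq : GoodPotential q B c) (z : ℂ) :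
    Function.Periodic (gLog q α n z) 1 := by
  intro x
  have : siteSeq q α z (x + 1) = siteSeq q α z x := by
    funext k
    simp only [siteSeq]
    rw [show x + 1 + k * α = x + k * α + 1 by ring, hq.periodic]
  simp only [gLog, this]

lemma exists_norm_gLog_le (hq : GoodPotential q B c) (ρ : ℝ) :
    ∃ C : ℝ, ∀ z : ℂ, 0 ≤ z.im → ‖z‖ ≤ ρ → ∀ x, ‖gLog q α n z x‖ ≤ C := by
  obtain ⟨C, hC⟩ := exists_norm_phaseLog_le (ρ + B) n 1 1 one_pos
  refine ⟨C, fun z hz hz' x => hC _ (fun k => ?_) (fun k => ?_) _ (by simp) (by simp)⟩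
  · rwa [siteSeq_im]
  · linarith [norm_siteSeq_le α hq z x k]

lemma intervalIntegrable_of_bdd {F : Type*} [NormedAddCommGroup F] [MeasurableSpace F]
    [BorelSpace F] [SecondCountableTopology F] {f : ℝ → F} (hf : Measurable f) {C : ℝ}
    (hC : ∀ x, ‖f x‖ ≤ C) (a b : ℝ) : IntervalIntegrable f volume a b := by
  rw [intervalIntegrable_iff]
  exact Measure.integrableOn_of_bounded (M := C) (by simp) hf.aestronglyMeasurable
    (Eventually.of_forall hC)

lemma intervalIntegrable_gLog (hq : GoodPotential q B c) {z : ℂ} (hz : 0 ≤ z.im) (a b : ℝ) :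
    IntervalIntegrable (gLog q α n z) volume a b := by
  obtain ⟨C, hC⟩ := exists_norm_gLog_le α n hq ‖z‖
  exact intervalIntegrable_of_bdd (measurable_gLog α n hq z) (hC z hz le_rfl) a b

lemma integrable_im (hq : GoodPotential q B c) {z : ℂ} (hz : 0 ≤ z.im) (a b : ℝ) :
    IntervalIntegrable (fun x => (gLog q α n z x).im) volume a b := by
  obtain ⟨C, hC⟩ := exists_norm_gLog_le α n hq ‖z‖
  exact intervalIntegrable_of_bdd (Complex.measurable_im.comp (measurable_gLog α n hq z))
    (fun x => (Complex.abs_im_le_norm _).trans (hC z hz le_rfl x)) a b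

lemma avgLog_im (hq : GoodPotential q B c) {z : ℂ} (hz : 0 ≤ z.im) :
    (avgLog q α n z).im = ∫ x in (0:ℝ)..1, (gLog q α n z x).im :=
  (Complex.imCLM.intervalIntegral_comp_comm (intervalIntegrable_gLog α n hq hz 0 1)).symm

lemma avgLog_re (hq : GoodPotential q B c) {z : ℂ} (hz : 0 ≤ z.im) :
    (avgLog q α n z).re = ∫ x in (0:ℝ)..1, (gLog q α n z x).re :=
  (Complex.reCLM.intervalIntegral_comp_comm (intervalIntegrable_gLog α n hq hz 0 1)).symm

lemma avgLog_im_le_sub (hq : GoodPotential q B c) {z : ℂ} (hz : 0 ≤ z.im) {t : ℝ}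
    (ht : 0 ≤ t) : (avgLog q α n z).im ≤ (avgLog q α n (z - t)).im := by
  have hz' : 0 ≤ (z - t).im := by simpa using hz
  rw [avgLog_im α n hq hz, avgLog_im α n hq hz']
  refine intervalIntegral.integral_mono_on zero_le_one (integrable_im α n hq hz _ _)
    (integrable_im α n hq hz' _ _) fun x _ => ?_
  have := phaseLog_im_ge n (siteSeq q α z x) (siteSeq q α (z - t) x) 0
    (fun k => by rwa [siteSeq_im]) (fun k => by rwa [siteSeq_im]) (fun k => le_rfl)
    (fun k => Or.inr ⟨t, ht, by simp only [siteSeq]; ring⟩) Complex.I (by simp)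
  simpa [gLog] using this

/-! ### The Wegner estimate -/

/-- The indicator of the points `x` for which `(x, x + h]` contains an integer (for `0 < h ≤ 1`),
that is, of those `x` for which the potential may jump downwards between `x` and `x + h`. -/
def jumpInd (h : ℝ) (x : ℝ) : ℝ := if 1 - h ≤ Int.fract x then 1 else 0

lemma jumpInd_periodic (h : ℝ) : Function.Periodic (jumpInd h) 1 := by
  intro x; simp [jumpInd]

lemma measurable_jumpInd (h : ℝ) : Measurable (jumpInd h) :=
  Measurable.ite (measurableSet_le measurable_const measurable_fract) measurable_const
    measurable_const

lemma intervalIntegrable_jumpInd (h a b : ℝ) : IntervalIntegrable (jumpInd h) volume a b :=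
  intervalIntegrable_of_bdd (C := 1) (measurable_jumpInd h)
    (fun x => by unfold jumpInd; split_ifs <;> simp) a b

lemma integral_jumpInd {h : ℝ} (h0 : 0 ≤ h) (h1 : h ≤ 1) (y : ℝ) :
    ∫ x in (0:ℝ)..1, jumpInd h (x + y) = h := by
  have e0 : ∫ x in (0:ℝ)..(1 - h), jumpInd h x = ∫ _ in (0:ℝ)..(1 - h), (0:ℝ) := by
    refine intervalIntegral.integral_congr_Ioo_of_le (by linarith) fun x hx => ?_
    have : Int.fract x = x := Int.fract_eq_self.2 ⟨hx.1.le, by linarith [hx.2]⟩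
    simp only [jumpInd, this]
    rw [if_neg (by linarith [hx.2])]
  have e1 : ∫ x in (1 - h)..1, jumpInd h x = ∫ _ in (1 - h)..1, (1:ℝ) := by
    refine intervalIntegral.integral_congr_Ioo_of_le (by linarith) fun x hx => ?_
    have : Int.fract x = x := Int.fract_eq_self.2 ⟨by linarith [hx.1], hx.2⟩
    simp only [jumpInd, this]
    rw [if_pos hx.1.le]
  rw [intervalIntegral.integral_comp_add_right (fun x => jumpInd h x) y, zero_add, add_comm 1 y,
    (jumpInd_periodic h).intervalIntegral_add_eq y 0, zero_add,
    ← intervalIntegral.integral_add_adjacent_intervals (b := 1 - h)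
      (intervalIntegrable_jumpInd h _ _) (intervalIntegrable_jumpInd h _ _), e0, e1]
  simp

/-- Translating `x` by `h` lowers all diagonal entries by at least `c h`, except at the sites where
a jump is crossed; each of these costs at most `π` and occurs with probability `h`. Since the
average is invariant under translation, the averaged phase has Lipschitz constant at most `π n / c`
in the energy. -/
lemma avgLog_im_sub_le (hq : GoodPotential q B c) {z : ℂ} (hz : 0 ≤ z.im) {h : ℝ}
    (h0 : 0 ≤ h) (h1 : h ≤ 1) :
    (avgLog q α n (z - (c * h : ℝ))).im ≤ (avgLog q α n z).im + Real.pi * n * h := by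
  have hz' : 0 ≤ (z - (c * h : ℝ)).im := by rw [Complex.sub_im, Complex.ofReal_im]; linarith
  have hpt : ∀ x : ℝ, (gLog q α n (z - (c * h : ℝ)) x).im -
      Real.pi * ∑ k ∈ Finset.range n, jumpInd h (x + k * α) ≤ (gLog q α n z (x + h)).im := by
    intro x
    refine phaseLog_im_ge n _ _ (fun k => jumpInd h (x + k * α)) (fun k => by rwa [siteSeq_im])
      (fun k => by rwa [siteSeq_im])
      (fun k => by unfold jumpInd; split_ifs <;> simp) (fun k => ?_) _ (by simp)
    by_cases hk : 1 - h ≤ Int.fract (x + k * α)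
    · left; simp [jumpInd, hk]
    · right
      refine ⟨q (x + k * α + h) - q (x + k * α) - c * h, ?_, ?_⟩
      · have := hq.incr (x + k * α) h h0 (by linarith)
        linarith
      · simp only [siteSeq]
        rw [show x + h + k * α = x + k * α + h by ring]
        push_cast
        ring
  have hshift : ∫ x in (0:ℝ)..1, (gLog q α n z (x + h)).im = (avgLog q α n z).im := by
    rw [avgLog_im α n hq hz,
      intervalIntegral.integral_comp_add_right (fun x => (gLog q α n z x).im) h, zero_add,
      add_comm 1 h]
    have hp : Function.Periodic (fun x => (gLog q α n z x).im) 1 := fun x => by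
      simp only [gLog_periodic α n hq z x]
    simpa using hp.intervalIntegral_add_eq h 0
  have hJ : ∀ k : ℕ, IntervalIntegrable (fun x => jumpInd h (x + k * α)) volume 0 1 := fun k =>
    intervalIntegrable_of_bdd (C := 1) ((measurable_jumpInd h).comp (measurable_id.add_const _))
      (fun x => by simp only [Function.comp, jumpInd]; split_ifs <;> simp) 0 1
  have hS : IntervalIntegrable (fun x => ∑ k ∈ Finset.range n, jumpInd h (x + k * α)) volume 0 1 := by
    have := IntervalIntegrable.sum (Finset.range n)
      (f := fun (k : ℕ) (x : ℝ) => jumpInd h (x + k * α)) (μ := volume) (a := 0) (b := 1)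
      (fun k _ => hJ k)
    have e : (fun x => ∑ k ∈ Finset.range n, jumpInd h (x + k * α)) =
        ∑ k ∈ Finset.range n, fun x : ℝ => jumpInd h (x + k * α) := by
      ext x; simp
    rw [e]; exact this
  have hsh : IntervalIntegrable (fun x => (gLog q α n z (x + h)).im) volume 0 1 := by
    obtain ⟨C, hC⟩ := exists_norm_gLog_le α n hq ‖z‖
    exact intervalIntegrable_of_bdd ((Complex.measurable_im.comp (measurable_gLog α n hq z)).comp
      (measurable_id.add_const _))
      (fun x => (Complex.abs_im_le_norm _).trans (hC z hz le_rfl _)) 0 1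
  have hint := intervalIntegral.integral_mono_on zero_le_one
    ((integrable_im α n hq hz' 0 1).sub (hS.const_mul Real.pi)) hsh (fun x _ => hpt x)
  rw [hshift, intervalIntegral.integral_sub (integrable_im α n hq hz' 0 1) (hS.const_mul Real.pi),
    ← avgLog_im α n hq hz', intervalIntegral.integral_const_mul,
    intervalIntegral.integral_finsetSum (fun k _ => hJ k)] at hint
  simp only [integral_jumpInd h0 h1, Finset.sum_const, Finset.card_range, nsmul_eq_mul] at hint
  linarith

/-! ### Analyticity in the energy -/

lemma differentiableAt_gLog (z : ℂ) (hz : 0 ≤ z.im) (x : ℝ) :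
    DifferentiableAt ℂ (fun z => gLog q α n z x) z := by
  refine differentiableAt_phaseLog n (fun z k => siteSeq q α z x k) (fun _ => Complex.I) z
    (fun k => ?_) (differentiableAt_const _) (fun k => by rwa [siteSeq_im]) (by simp)
  exact differentiableAt_id.sub_const _

lemma continuousOn_avgLog (hq : GoodPotential q B c) :
    ContinuousOn (avgLog q α n) {z | 0 ≤ z.im} := by
  intro z₀ hz₀
  obtain ⟨C, hC⟩ := exists_norm_gLog_le α n hq (‖z₀‖ + 1)
  refine intervalIntegral.continuousWithinAt_of_dominated_interval (bound := fun _ => C)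
    (Eventually.of_forall fun z => (measurable_gLog α n hq z).aestronglyMeasurable) ?_
    intervalIntegrable_const
    (Eventually.of_forall fun x _ =>
      (differentiableAt_gLog α n z₀ hz₀ x).continuousAt.continuousWithinAt)
  have hb : ∀ᶠ z in nhdsWithin z₀ {z : ℂ | 0 ≤ z.im}, ‖z‖ ≤ ‖z₀‖ + 1 :=
    ((continuous_norm.tendsto z₀).mono_left nhdsWithin_le_nhds).eventually
      (eventually_le_nhds (by linarith))
  filter_upwards [self_mem_nhdsWithin, hb] with z h1 h2
  exact Eventually.of_forall fun x _ => hC z h1 h2 x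

lemma mem_closedBall_im {z w : ℂ} {r : ℝ} (h : w ∈ Metric.closedBall z r) : z.im - r ≤ w.im := by
  have := (Complex.abs_im_le_norm (w - z)).trans (mem_closedBall_iff_norm.1 h)
  rw [Complex.sub_im, abs_le] at this
  linarith [this.1]

lemma mem_closedBall_norm {z w : ℂ} {r : ℝ} (h : w ∈ Metric.closedBall z r) : ‖w‖ ≤ ‖z‖ + r := by
  have := mem_closedBall_iff_norm.1 h
  calc ‖w‖ = ‖z + (w - z)‖ := by ring_nf
    _ ≤ _ := (norm_add_le _ _).trans (by linarith)

lemma differentiableAt_avgLog (hq : GoodPotential q B c) {z₀ : ℂ} (hz₀ : 0 < z₀.im) :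
    DifferentiableAt ℂ (avgLog q α n) z₀ := by
  set r := z₀.im / 2 with hr
  have hr0 : 0 < r := by positivity
  obtain ⟨C, hC⟩ := exists_norm_gLog_le α n hq (‖z₀‖ + r + r)
  have hd : ∀ z ∈ Metric.ball z₀ r, ∀ x, HasDerivAt (fun z => gLog q α n z x)
      (deriv (fun z => gLog q α n z x) z) z := fun z hz x => by
    have := mem_closedBall_im (Metric.ball_subset_closedBall hz)
    exact (differentiableAt_gLog α n z (by linarith) x).hasDerivAt
  refine (intervalIntegral.hasDerivAt_integral_of_dominated_loc_of_deriv_le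
    (F := fun z x => gLog q α n z x) (F' := fun z x => deriv (fun z => gLog q α n z x) z)
    (bound := fun _ => C / r) (Metric.ball_mem_nhds z₀ hr0)
    (Eventually.of_forall fun z => (measurable_gLog α n hq z).aestronglyMeasurable)
    (intervalIntegrable_gLog α n hq hz₀.le 0 1) ?_ ?_ intervalIntegrable_const
    (Eventually.of_forall fun x _ z hz => hd z hz x)).2.differentiableAt
  -- Measurability in `x`: the derivative is a pointwise limit of difference quotients.
  · have hlim : Tendsto (fun k : ℕ => (((k : ℂ) + 1)⁻¹)) atTop (nhdsWithin 0 {0}ᶜ) := by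
      refine tendsto_nhdsWithin_iff.2 ⟨?_, Eventually.of_forall fun k => ?_⟩
      · have := tendsto_one_div_add_atTop_nhds_zero_nat (𝕜 := ℂ)
        simpa using this
      · simpa using Nat.cast_add_one_ne_zero k
    refine (measurable_of_tendsto_metrizable (f := fun (k : ℕ) x =>
      (((k : ℂ) + 1)⁻¹)⁻¹ • (gLog q α n (z₀ + ((k : ℂ) + 1)⁻¹) x - gLog q α n z₀ x))
      (fun k => ?_) (tendsto_pi_nhds.2 fun x => ?_)).aestronglyMeasurable
    · exact ((measurable_gLog α n hq (z₀ + ((k : ℂ) + 1)⁻¹)).sub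
        (measurable_gLog α n hq z₀)).const_smul (((k : ℂ) + 1)⁻¹)⁻¹
    · exact (hd z₀ (Metric.mem_ball_self hr0) x).tendsto_slope_zero.comp hlim
  · refine Eventually.of_forall fun x _ z hz => ?_
    have hz1 := mem_closedBall_im (Metric.ball_subset_closedBall hz)
    have hz2 := mem_closedBall_norm (Metric.ball_subset_closedBall hz)
    have him : ∀ w ∈ Metric.closedBall z r, 0 ≤ w.im := fun w hw => by
      linarith [mem_closedBall_im hw]
    refine Complex.norm_deriv_le_of_forall_mem_sphere_norm_le hr0
      (DifferentiableOn.diffContOnCl ?_) fun w hw => ?_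
    · intro w hw
      rw [closure_ball _ hr0.ne'] at hw
      exact (differentiableAt_gLog α n w (him w hw) x).differentiableWithinAt
    · have hw' := Metric.sphere_subset_closedBall hw
      exact hC w (him w hw') (by linarith [mem_closedBall_norm hw']) x

lemma norm_avgLog_le (hq : GoodPotential q B c) {η ρ : ℝ} (hη : 0 < η) (hη1 : η ≤ 1)
    {z : ℂ} (hz : η ≤ z.im) (hz' : ‖z‖ + B ≤ ρ) :
    ‖avgLog q α n z‖ ≤ (n + 1) * (|Real.log η| + |Real.log (ρ + η⁻¹ + 2)| + Real.pi) := by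
  have hρ : 0 ≤ ρ := (norm_nonneg _).trans ((norm_siteSeq_le α hq z 0 0).trans hz')
  have := intervalIntegral.norm_integral_le_of_norm_le_const (a := (0:ℝ)) (b := 1)
    (f := gLog q α n z) (C := (n + 1) * (|Real.log η| + |Real.log (ρ + η⁻¹ + 2)| + Real.pi))
    fun x _ => norm_phaseLog_le hη n (siteSeq q α z x) (fun k => by rwa [siteSeq_im])
      (fun k => (norm_siteSeq_le α hq z x k).trans hz') Complex.I (by simpa using hη1)
      (by
        have := inv_pos.2 hη
        simp only [Complex.norm_I]; linarith)
  simpa [avgLog] using this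

/-! ### Equicontinuity of the averaged logarithm -/

lemma deriv_avgLog_im (hq : GoodPotential q B c) (hc : 0 < c) {z : ℂ} (hz : 0 < z.im) :
    0 ≤ -(deriv (avgLog q α n) z).im ∧ -(deriv (avgLog q α n) z).im ≤ Real.pi * n / c := by
  have hd := (differentiableAt_avgLog α n hq hz).hasDerivAt
  have h1 : HasDerivAt (fun t : ℝ => (avgLog q α n (z - t)).im) (-(deriv (avgLog q α n) z).im) 0 := by
    have ht : HasDerivAt (fun t : ℝ => z - (t : ℂ)) (-1) 0 := by
      simpa using (HasDerivAt.ofReal_comp (hasDerivAt_id (0:ℝ))).const_sub z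
    have h2 : HasDerivAt (avgLog q α n) (deriv (avgLog q α n) z) (z - ((0:ℝ) : ℂ)) := by
      simpa using hd
    have h3 := h2.comp (0:ℝ) ht
    have h4 := (Complex.imCLM.hasFDerivAt (x := (avgLog q α n (z - ((0:ℝ):ℂ))))).comp_hasDerivAt (0:ℝ) h3
    exact h4.congr_deriv (by simp)
  have hs := h1.tendsto_slope_zero_right
  constructor
  · refine ge_of_tendsto hs ?_
    filter_upwards [self_mem_nhdsWithin] with t ht
    have ht : 0 < t := ht
    have := avgLog_im_le_sub α n hq hz.le ht.le
    simp only [zero_add, Complex.ofReal_zero, sub_zero, smul_eq_mul]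
    exact mul_nonneg (by positivity) (by linarith)
  · refine le_of_tendsto hs ?_
    have : Set.Ioo (0:ℝ) c ∈ nhdsWithin (0:ℝ) (Set.Ioi 0) := Ioo_mem_nhdsGT hc
    filter_upwards [this] with t ht
    have h5 := avgLog_im_sub_le α n hq hz.le (h := t / c) (div_nonneg ht.1.le hc.le)
      ((div_le_one hc).2 ht.2.le)
    rw [mul_div_cancel₀ _ hc.ne'] at h5
    simp only [zero_add, Complex.ofReal_zero, sub_zero, smul_eq_mul]
    rw [inv_mul_le_iff₀ ht.1]
    calc _ ≤ Real.pi * n * (t / c) := by linarith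
      _ = _ := by ring

/-- By the Cauchy–Riemann equations the vertical derivative of the real part is minus the horizontal
derivative of the imaginary part, so the Wegner estimate controls the passage from the real axis to
height `η`. -/
lemma avgLog_re_vertical (hq : GoodPotential q B c) (hc : 0 < c) (E : ℝ) {η : ℝ} (hη : 0 ≤ η) :
    (avgLog q α n E).re ≤ (avgLog q α n (E + η * Complex.I)).re ∧
    (avgLog q α n (E + η * Complex.I)).re ≤ (avgLog q α n E).re + Real.pi * n / c * η := by
  set f : ℝ → ℝ := fun y => (avgLog q α n (E + y * Complex.I)).re with hf
  have hder : ∀ y : ℝ, 0 < y →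
      HasDerivAt f (-(deriv (avgLog q α n) (E + y * Complex.I)).im) y := fun y hy => by
    have hd := (differentiableAt_avgLog α n hq (z₀ := E + y * Complex.I) (by simpa using hy)).hasDerivAt
    have ht : HasDerivAt (fun y : ℝ => (E : ℂ) + (y : ℂ) * Complex.I) Complex.I y := by
      simpa using ((HasDerivAt.ofReal_comp (hasDerivAt_id y)).mul_const Complex.I).const_add (E : ℂ)
    have h4 := (Complex.reCLM.hasFDerivAt (x := avgLog q α n (E + y * Complex.I))).comp_hasDerivAt y
      (hd.comp y ht)
    exact h4.congr_deriv (by simp)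
  have hcont : ContinuousOn f (Set.Ici 0) := by
    refine Complex.continuous_re.comp_continuousOn
      ((continuousOn_avgLog α n hq).comp (by fun_prop) fun y hy => ?_)
    simpa using hy
  have hdiff : DifferentiableOn ℝ f (interior (Set.Ici 0)) := by
    rw [interior_Ici]
    exact fun y hy => (hder y hy).differentiableAt.differentiableWithinAt
  have hm := monotoneOn_of_deriv_nonneg (convex_Ici 0) hcont hdiff (fun y hy => by
    rw [interior_Ici] at hy
    rw [(hder y hy).deriv]
    exact (deriv_avgLog_im α n hq hc (by simpa using hy)).1)
  have hl := (convex_Ici (0:ℝ)).image_sub_le_mul_sub_of_deriv_le hcont hdiff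
    (C := Real.pi * n / c) (fun y hy => by
    rw [interior_Ici] at hy
    rw [(hder y hy).deriv]
    exact (deriv_avgLog_im α n hq hc (by simpa using hy)).2) 0 (by simp) η hη hη
  have h0 : f 0 = (avgLog q α n E).re := by simp [hf]
  have hm' : f 0 ≤ f η := hm (by simp) hη hη
  rw [h0] at hm' hl
  exact ⟨hm', by simp only [hf] at hl ⊢; linarith⟩

/-- At a fixed height `η` the averaged logarithm is Lipschitz in the energy, with a constant
proportional to `n + 1`, by Cauchy's estimate. -/
lemma avgLog_horizontal (hq : GoodPotential q B c) (E₀ : ℝ) {η : ℝ} (hη : 0 < η) (hη1 : η ≤ 1) :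
    ∃ K : ℝ, 0 ≤ K ∧ ∀ n : ℕ, ∀ E : ℝ, |E - E₀| ≤ 1 →
      |(avgLog q α n (E + η * Complex.I)).re - (avgLog q α n (E₀ + η * Complex.I)).re|
        ≤ (n + 1) * K * |E - E₀| := by
  set r := η / 2 with hr
  have hr0 : 0 < r := by positivity
  set ρ := ‖(E₀ : ℂ) + η * Complex.I‖ + 1 + r + B with hρ
  set L := |Real.log r| + |Real.log (ρ + r⁻¹ + 2)| + Real.pi with hL
  have hL0 : 0 ≤ L := by have := Real.pi_pos; positivity
  refine ⟨L / r, by positivity, fun n E hE => ?_⟩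
  set z₀ : ℂ := (E₀ : ℂ) + η * Complex.I with hz₀
  have hz₀i : z₀.im = η := by simp [hz₀]
  set S : Set ℂ := Metric.closedBall z₀ 1 ∩ {z | η ≤ z.im} with hS
  have hconv : Convex ℝ S := (convex_closedBall z₀ 1).inter (convex_halfSpace_im_ge η)
  have hball : ∀ z ∈ S, ∀ w ∈ Metric.closedBall z r, r ≤ w.im ∧ ‖w‖ + B ≤ ρ := fun z hz w hw => by
    have h1 := mem_closedBall_im hw
    have h2 := mem_closedBall_norm hw
    have h3 := mem_closedBall_norm hz.1
    have h4 : η ≤ z.im := hz.2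
    constructor <;> linarith
  have hdb : ∀ z ∈ S, ‖deriv (avgLog q α n) z‖ ≤ (n + 1) * L / r := fun z hz => by
    refine Complex.norm_deriv_le_of_forall_mem_sphere_norm_le hr0
      (DifferentiableOn.diffContOnCl ?_) fun w hw => ?_
    · intro w hw
      rw [closure_ball _ hr0.ne'] at hw
      exact (differentiableAt_avgLog α n hq
        (hr0.trans_le (hball z hz w hw).1)).differentiableWithinAt
    · have := hball z hz w (Metric.sphere_subset_closedBall hw)
      exact norm_avgLog_le α n hq hr0 (by linarith) this.1 this.2
  have h0 : z₀ ∈ S := ⟨Metric.mem_closedBall_self zero_le_one, hz₀i.ge⟩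
  have hsub : ((E : ℂ) + η * Complex.I) - z₀ = ((E - E₀ : ℝ) : ℂ) := by
    rw [hz₀]; push_cast; ring
  have h1 : (E : ℂ) + η * Complex.I ∈ S := by
    refine ⟨?_, by simp⟩
    rw [mem_closedBall_iff_norm, hsub, Complex.norm_real]
    exact hE
  have := hconv.norm_image_sub_le_of_norm_deriv_le (𝕜 := ℂ) (fun z hz =>
    differentiableAt_avgLog α n hq (hη.trans_le hz.2)) hdb h0 h1
  rw [hsub, Complex.norm_real, Real.norm_eq_abs] at this
  rw [← Complex.sub_re]
  refine (Complex.abs_re_le_norm _).trans (this.trans_eq ?_)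
  ring

lemma equicontinuous_avgLog (hq : GoodPotential q B c) (hc : 0 < c) (E₀ : ℝ) {ε : ℝ} (hε : 0 < ε) :
    ∀ᶠ E : ℝ in nhds E₀, ∀ n : ℕ,
      |(avgLog q α n (E : ℂ)).re - (avgLog q α n (E₀ : ℂ)).re| ≤ (n + 1) * ε := by
  have hp := Real.pi_pos
  set η := min 1 (ε * c / (2 * Real.pi)) with hη
  have hη0 : 0 < η := lt_min one_pos (by positivity)
  have hηε : Real.pi / c * η ≤ ε / 2 := by
    calc Real.pi / c * η ≤ Real.pi / c * (ε * c / (2 * Real.pi)) := by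
          gcongr; exact min_le_right _ _
      _ = ε / 2 := by field_simp
  obtain ⟨K, hK, h⟩ := avgLog_horizontal α hq E₀ hη0 (min_le_left _ _)
  have hev : ∀ᶠ E : ℝ in nhds E₀, |E - E₀| < min 1 (ε / (2 * (K + 1))) := by
    have := Metric.ball_mem_nhds E₀ (lt_min one_pos (by positivity : 0 < ε / (2 * (K + 1))))
    filter_upwards [this] with E hE
    rwa [Metric.mem_ball, Real.dist_eq] at hE
  filter_upwards [hev] with E hE n
  have h1 := h n E (hE.le.trans (min_le_left _ _))
  have h2 : K * |E - E₀| ≤ ε / 2 := by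
    calc K * |E - E₀| ≤ (K + 1) * (ε / (2 * (K + 1))) := by
          gcongr
          · linarith
          · exact hE.le.trans (min_le_right _ _)
      _ = ε / 2 := by field_simp
  have h3 := avgLog_re_vertical α n hq hc E hη0.le
  have h4 := avgLog_re_vertical α n hq hc E₀ hη0.le
  have h5 : Real.pi * n / c * η ≤ (n + 1) * (ε / 2) := by
    calc Real.pi * n / c * η = n * (Real.pi / c * η) := by ring
      _ ≤ n * (ε / 2) := by gcongr
      _ ≤ _ := by linarith
  have h6 : (n + 1) * K * |E - E₀| ≤ (n + 1) * (ε / 2) := by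
    rw [mul_assoc]; gcongr
  rw [abs_le] at h1 ⊢
  constructor <;> linarith [h1.1, h1.2, h3.1, h3.2, h4.1, h4.2]

end

/-! ### Comparison with the transfer matrices -/

section
variable (lam : ℝ) (v : ℝ → ℝ) (α E : ℝ) (n : ℕ)

lemma transferMat_succ_left (x : ℝ) :
    transferMat lam v α E x (n + 1) =
      transferMat lam v α E (x + α) n * !![E - lam * v x, -1; 1, 0] := by
  induction n with
  | zero => simp [transferMat]
  | succ n ih =>
    have e : x + ((n + 1 : ℕ) : ℝ) * α = x + α + n * α := by push_cast; ring
    rw [transferMat, ih, transferMat, Matrix.mul_assoc, e]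

lemma det_transferMat (x : ℝ) : (transferMat lam v α E x n).det = 1 := by
  induction n with
  | zero => simp [transferMat]
  | succ n ih => rw [transferMat, Matrix.det_mul, ih]; simp [Matrix.det_fin_two]

lemma bdryForm_eq_transferMat : ∀ (x : ℝ) (a b : ℂ),
    bdryForm n (siteSeq (fun y => lam * v y) α (E : ℂ) x) a b =
      ((transferMat lam v α E x n 0 0 : ℝ) * a + (transferMat lam v α E x n 0 1 : ℝ) * b) +
      Complex.I *
        ((transferMat lam v α E x n 1 0 : ℝ) * a + (transferMat lam v α E x n 1 1 : ℝ) * b) := by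
  induction n with
  | zero => intro x a b; simp [bdryForm, transferMat]
  | succ n ih =>
    intro x a b
    have hs : (fun k => siteSeq (fun y => lam * v y) α (E : ℂ) x (k + 1)) =
        siteSeq (fun y => lam * v y) α (E : ℂ) (x + α) := by
      funext k
      simp only [siteSeq]
      rw [show x + ((k + 1 : ℕ) : ℝ) * α = x + α + k * α by push_cast; ring]
    have h0 : siteSeq (fun y => lam * v y) α (E : ℂ) x 0 = ((E - lam * v x : ℝ) : ℂ) := by
      simp [siteSeq]
    rw [bdryForm, hs, ih, h0, transferMat_succ_left]
    simp only [Matrix.mul_apply, Fin.sum_univ_two, Matrix.of_apply, Matrix.cons_val', Matrix.cons_val_zero,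
      Matrix.cons_val_one, Matrix.cons_val_fin_one]
    push_cast
    ring

/-- For a real `2 × 2` matrix of determinant one,
`|(1, i) · M (i, 1)ᵀ|² = (M₀₁ - M₁₀)² + (M₀₀ + M₁₁)² = ‖M‖² + 2`. -/
lemma exp_two_re_gLog (x : ℝ) :
    Real.exp (2 * (gLog (fun y => lam * v y) α n (E : ℂ) x).re) =
      matNorm (transferMat lam v α E x n) ^ 2 + 2 := by
  have h1 : Complex.exp (gLog (fun y => lam * v y) α n (E : ℂ) x) = _ :=
    exp_phaseLog n (siteSeq (fun y => lam * v y) α (E : ℂ) x)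
      (fun k => by rw [siteSeq_im]; simp) Complex.I (by simp)
  rw [bdryForm_eq_transferMat] at h1
  have hd := det_transferMat lam v α E n x
  rw [Matrix.det_fin_two] at hd
  set M := transferMat lam v α E x n
  have h2 : Complex.normSq (Complex.exp (gLog (fun y => lam * v y) α n (E : ℂ) x)) =
      (M 0 1 - M 1 0) ^ 2 + (M 0 0 + M 1 1) ^ 2 := by
    rw [h1, Complex.normSq_apply]
    simp
    ring
  rw [Complex.normSq_eq_norm_sq, Complex.norm_exp] at h2
  rw [two_mul, Real.exp_add, ← sq, h2, matNorm, Real.sq_sqrt (by positivity)]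
  simp only [Fin.sum_univ_two]
  linear_combination 2 * hd

lemma two_le_matNorm_sq (x : ℝ) : 2 ≤ matNorm (transferMat lam v α E x n) ^ 2 := by
  have hd := det_transferMat lam v α E n x
  rw [Matrix.det_fin_two] at hd
  set M := transferMat lam v α E x n
  rw [matNorm, Real.sq_sqrt (by positivity)]
  simp only [Fin.sum_univ_two]
  nlinarith [sq_nonneg (M 0 0 - M 1 1), sq_nonneg (M 0 1 + M 1 0)]

lemma log_matNorm_eq (x : ℝ) : Real.log (matNorm (transferMat lam v α E x n)) =
    Real.log (Real.exp (2 * (gLog (fun y => lam * v y) α n (E : ℂ) x).re) - 2) / 2 := by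
  rw [exp_two_re_gLog, add_sub_cancel_right, Real.log_pow]
  push_cast; ring

lemma log_matNorm_nonneg (x : ℝ) : 0 ≤ Real.log (matNorm (transferMat lam v α E x n)) := by
  have h := two_le_matNorm_sq lam v α E n x
  have : 0 ≤ Real.log (matNorm (transferMat lam v α E x n) ^ 2) := Real.log_nonneg (by linarith)
  rw [Real.log_pow] at this
  push_cast at this
  linarith

lemma log_matNorm_le (x : ℝ) : Real.log (matNorm (transferMat lam v α E x n)) ≤
    (gLog (fun y => lam * v y) α n (E : ℂ) x).re := by
  have h := two_le_matNorm_sq lam v α E n x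
  have h1 := Real.log_le_log (by linarith : 0 < matNorm (transferMat lam v α E x n) ^ 2)
    (by linarith : matNorm (transferMat lam v α E x n) ^ 2 ≤
      matNorm (transferMat lam v α E x n) ^ 2 + 2)
  rw [← exp_two_re_gLog, Real.log_exp, Real.log_pow] at h1
  push_cast at h1
  linarith

lemma re_gLog_le_log_matNorm (x : ℝ) : (gLog (fun y => lam * v y) α n (E : ℂ) x).re ≤
    Real.log (matNorm (transferMat lam v α E x n)) + 1 / 2 := by
  have h := two_le_matNorm_sq lam v α E n x
  have h1 := Real.log_le_log (by linarith : 0 < matNorm (transferMat lam v α E x n) ^ 2 + 2)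
    (by linarith : matNorm (transferMat lam v α E x n) ^ 2 + 2 ≤
      2 * matNorm (transferMat lam v α E x n) ^ 2)
  rw [← exp_two_re_gLog, Real.log_exp, Real.log_mul two_ne_zero (by linarith), Real.log_pow] at h1
  push_cast at h1
  linarith [Real.log_two_lt_d9]

variable {lam v} {B c : ℝ}

lemma measurable_log_matNorm (hq : GoodPotential (fun y => lam * v y) B c) :
    Measurable fun x => Real.log (matNorm (transferMat lam v α E x n)) := by
  simp only [log_matNorm_eq]
  have := measurable_gLog α n hq (E : ℂ)
  fun_prop

lemma exists_log_matNorm_le (hq : GoodPotential (fun y => lam * v y) B c) (ρ : ℝ) :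
    ∃ C : ℝ, ∀ E : ℝ, |E| ≤ ρ → ∀ x,
      ‖Real.log (matNorm (transferMat lam v α E x n))‖ ≤ C := by
  obtain ⟨C, hC⟩ := exists_norm_gLog_le α n hq ρ
  refine ⟨C, fun E hE x => ?_⟩
  rw [Real.norm_eq_abs, abs_of_nonneg (log_matNorm_nonneg lam v α E n x)]
  refine (log_matNorm_le lam v α E n x).trans ((Complex.re_le_norm _).trans
    (hC E (by simp) ?_ x))
  rwa [Complex.norm_real]

lemma continuous_integral_log_matNorm (hq : GoodPotential (fun y => lam * v y) B c) :
    Continuous fun E => ∫ x in (0:ℝ)..1, Real.log (matNorm (transferMat lam v α E x n)) := by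
  refine continuous_iff_continuousAt.2 fun E₀ => ?_
  obtain ⟨C, hC⟩ := exists_log_matNorm_le α n hq (|E₀| + 1)
  refine intervalIntegral.continuousAt_of_dominated_interval (bound := fun _ => C)
    (Eventually.of_forall fun E => (measurable_log_matNorm α E n hq).aestronglyMeasurable) ?_
    intervalIntegrable_const (Eventually.of_forall fun x _ => ?_)
  · have hb : ∀ᶠ E : ℝ in nhds E₀, |E| ≤ |E₀| + 1 :=
      (continuous_abs.tendsto E₀).eventually (eventually_le_nhds (by linarith))
    filter_upwards [hb] with E hE
    exact Eventually.of_forall fun x _ => hC E hE x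
  · simp only [log_matNorm_eq]
    have h1 : ContinuousAt (fun E : ℝ => gLog (fun y => lam * v y) α n (E : ℂ) x) E₀ :=
      ContinuousAt.comp (g := fun z => gLog (fun y => lam * v y) α n z x)
        (differentiableAt_gLog α n (E₀ : ℂ) (by simp) x).continuousAt
        Complex.continuous_ofReal.continuousAt
    have h2 : ContinuousAt (fun E : ℝ =>
        Real.exp (2 * (gLog (fun y => lam * v y) α n (E : ℂ) x).re) - 2) E₀ :=
      (((Complex.continuous_re.continuousAt.comp h1).const_mul 2).rexp).sub continuousAt_const
    refine (h2.log ?_).div_const 2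
    rw [exp_two_re_gLog]
    linarith [two_le_matNorm_sq lam v α E₀ n x]

lemma integral_log_matNorm_bounds (hq : GoodPotential (fun y => lam * v y) B c) :
    ∫ x in (0:ℝ)..1, Real.log (matNorm (transferMat lam v α E x n)) ≤
      (avgLog (fun y => lam * v y) α n (E : ℂ)).re ∧
    (avgLog (fun y => lam * v y) α n (E : ℂ)).re ≤
      (∫ x in (0:ℝ)..1, Real.log (matNorm (transferMat lam v α E x n))) + 1 / 2 := by
  obtain ⟨C, hC⟩ := exists_log_matNorm_le α n hq |E|
  have hi : IntervalIntegrable (fun x => Real.log (matNorm (transferMat lam v α E x n)))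
      volume 0 1 :=
    intervalIntegrable_of_bdd (measurable_log_matNorm α E n hq) (hC E le_rfl) 0 1
  have hz : 0 ≤ (E : ℂ).im := by simp
  have hr : IntervalIntegrable (fun x => (gLog (fun y => lam * v y) α n (E : ℂ) x).re)
      volume 0 1 := by
    obtain ⟨C, hC⟩ := exists_norm_gLog_le α n hq ‖(E : ℂ)‖
    exact intervalIntegrable_of_bdd (Complex.measurable_re.comp (measurable_gLog α n hq E))
      (fun x => (Complex.abs_re_le_norm _).trans (hC E hz le_rfl x)) 0 1
  rw [avgLog_re α n hq hz]
  refine ⟨intervalIntegral.integral_mono_on zero_le_one hi hr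
    fun x _ => log_matNorm_le lam v α E n x, ?_⟩
  have := intervalIntegral.integral_mono_on zero_le_one hr
    (hi.add (intervalIntegrable_const (c := (1 / 2 : ℝ))))
    fun x _ => re_gLog_le_log_matNorm lam v α E n x
  rw [intervalIntegral.integral_add hi intervalIntegrable_const] at this
  simpa using this

/-- The finite-scale averages `(1/n) ∫ log ‖M_n‖` are equicontinuous. For large `n` this comes from
`equicontinuous_avgLog`, the error `1/2` in the comparison being negligible after division by `n`;
the finitely many remaining `n` are handled by continuity. -/
lemma equicontinuous_finite_scale (hq : GoodPotential (fun y => lam * v y) B c) (hc : 0 < c)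
    (E₀ : ℝ) {ε : ℝ} (hε : 0 < ε) :
    ∀ᶠ E : ℝ in nhds E₀, ∀ n : ℕ+,
      |(1 / (n : ℝ)) * (∫ x in (0:ℝ)..1, Real.log (matNorm (transferMat lam v α E x n))) -
        (1 / (n : ℝ)) * ∫ x in (0:ℝ)..1, Real.log (matNorm (transferMat lam v α E₀ x n))| ≤ ε := by
  -- For `n ≥ N` the comparison error satisfies `1 / 2 ≤ n * ε / 2`.
  obtain ⟨N, hN⟩ := exists_nat_ge (1 / ε)
  have hsmall : ∀ᶠ E : ℝ in nhds E₀, ∀ n ∈ Finset.range N,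
      |(∫ x in (0:ℝ)..1, Real.log (matNorm (transferMat lam v α E x n))) -
        ∫ x in (0:ℝ)..1, Real.log (matNorm (transferMat lam v α E₀ x n))| ≤ ε := by
    rw [Filter.eventually_all_finset]
    intro n _
    have := (continuous_integral_log_matNorm α n hq).tendsto E₀
    filter_upwards [Metric.tendsto_nhds.1 this ε hε] with E hE
    rw [Real.dist_eq] at hE
    exact hE.le
  filter_upwards [hsmall, equicontinuous_avgLog α hq hc E₀ (by positivity : 0 < ε / 4)]
    with E h1 h2 n
  have hn : (1 : ℝ) ≤ n := by exact_mod_cast one_le (a := n)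
  have hn0 : (0 : ℝ) < n := by linarith
  rw [← mul_sub, abs_mul, abs_of_pos (by positivity), one_div, inv_mul_le_iff₀ hn0]
  by_cases hnN : (n : ℕ) < N
  · refine (h1 n (Finset.mem_range.2 hnN)).trans ?_
    nlinarith
  · have hn2 : 1 ≤ n * ε := by
      have : (N : ℝ) ≤ n := by exact_mod_cast not_lt.1 hnN
      have := hN.trans this
      rwa [div_le_iff₀ hε] at this
    have h3 := h2 n
    have h4 := integral_log_matNorm_bounds α E n hq
    have h5 := integral_log_matNorm_bounds α E₀ n hq
    have h6 : (n + 1 : ℝ) * (ε / 4) ≤ n * ε / 2 := by nlinarith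
    rw [abs_le] at h3 ⊢
    constructor <;> linarith [h3.1, h3.2, h4.1, h4.2, h5.1, h5.2]

end

/-! ### Continuity of the Lyapunov exponent -/

lemma goodPotential {lam γm γp : ℝ} {v : ℝ → ℝ} (hlam : 0 < lam) (hγm : 0 < γm) (hγp : 0 < γp)
    (hper : ∀ x : ℝ, v (x + 1) = v x) (hv0 : v 0 = 0)
    (hmono : ∀ x y : ℝ, 0 ≤ x → x ≤ y → y < 1 →
      γm * (y - x) ≤ v y - v x ∧ v y - v x ≤ γp * (y - x)) :
    GoodPotential (fun y => lam * v y) (lam * γp) (lam * γm) := by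
  have hp : Function.Periodic v 1 := hper
  have hfr : ∀ x, v x = v (Int.fract x) := fun x => by
    have := hp.sub_int_mul_eq (x := x) ⌊x⌋
    rw [mul_one] at this
    exact this.symm
  have hbd : ∀ x, 0 ≤ v x ∧ v x ≤ γp := fun x => by
    have h := hmono 0 (Int.fract x) le_rfl (Int.fract_nonneg x) (Int.fract_lt_one x)
    rw [hv0, sub_zero, sub_zero, ← hfr] at h
    have h0 := Int.fract_nonneg x
    have h1 := Int.fract_lt_one x
    constructor
    · exact le_trans (by positivity) h.1
    · nlinarith [h.2]
  refine ⟨?_, fun x => mul_nonneg hlam.le (hbd x).1, fun x => by gcongr; exact (hbd x).2,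
    fun x => by simp only [hper], fun x h h0 h1 => ?_⟩
  · refine Measurable.const_mul ?_ lam
    have hc : ContinuousOn v (Set.Ico 0 1) := by
      refine LipschitzOnWith.continuousOn (K := γp.toNNReal) (LipschitzOnWith.of_le_add_mul _ ?_)
      intro x hx y hy
      rw [Real.coe_toNNReal _ hγp.le, Real.dist_eq]
      rcases le_total x y with hxy | hxy
      · have := (hmono x y hx.1 hxy hy.2).1
        nlinarith [abs_nonneg (x - y)]
      · have := (hmono y x hy.1 hxy hx.2).2
        rw [abs_of_nonneg (by linarith)]
        linarith
    have hm : Measurable ((Set.Ico (0:ℝ) 1).piecewise v 0) :=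
      hc.measurable_piecewise continuousOn_const measurableSet_Ico
    have he : v = fun x => (Set.Ico (0:ℝ) 1).piecewise v 0 (Int.fract x) := by
      funext x
      rw [Set.piecewise_eq_of_mem _ _ _
        (show Int.fract x ∈ Set.Ico (0:ℝ) 1 from ⟨Int.fract_nonneg x, Int.fract_lt_one x⟩)]
      exact hfr x
    rw [he]
    exact hm.comp measurable_fract
  · have h2 := (hmono (Int.fract x) (Int.fract x + h) (Int.fract_nonneg x) (by linarith) h1).1
    have h3 : v (x + h) = v (Int.fract x + h) := by
      have := hp.sub_int_mul_eq (x := x + h) ⌊x⌋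
      rw [mul_one] at this
      rw [← this]
      congr 1
      rw [← Int.self_sub_floor]; ring
    rw [← hfr, ← h3, add_sub_cancel_left] at h2
    nlinarith

/-- the Lyapunov exponent is continuous in `E`. -/
theorem lyapunov_continuous
    (α lam γm γp : ℝ) (v : ℝ → ℝ)
    (hα : Irrational α) (hlam : 0 < lam) (hγm : 0 < γm) (hγp : 0 < γp)
    (hper : ∀ x : ℝ, v (x + 1) = v x) (hv0 : v 0 = 0)
    (hmono : ∀ x y : ℝ, 0 ≤ x → x ≤ y → y < 1 →
      γm * (y - x) ≤ v y - v x ∧ v y - v x ≤ γp * (y - x)) :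
    Continuous (fun E : ℝ => lyap lam v α E) := by
  have hq := goodPotential hlam hγm hγp hper hv0 hmono
  have hbdd : ∀ E : ℝ, BddBelow (Set.range fun n : ℕ+ => (1 / (n : ℝ)) *
      ∫ x in (0:ℝ)..1, Real.log (matNorm (transferMat lam v α E x (n : ℕ)))) := fun E => by
    refine ⟨0, ?_⟩
    rintro _ ⟨n, rfl⟩
    exact mul_nonneg (by positivity) (intervalIntegral.integral_nonneg zero_le_one
      fun x _ => log_matNorm_nonneg lam v α E n x)
  refine continuous_iff_continuousAt.2 fun E₀ => Metric.tendsto_nhds.2 fun ε hε => ?_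
  filter_upwards [equicontinuous_finite_scale α hq (mul_pos hlam hγm) E₀ (half_pos hε)] with E hE
  rw [Real.dist_eq]
  refine lt_of_le_of_lt ?_ (half_lt_self hε)
  rw [abs_le]
  constructor
  · have : lyap lam v α E₀ - ε / 2 ≤ lyap lam v α E := le_ciInf fun n => by
      have h1 := ciInf_le (hbdd E₀) n
      have h2 := (abs_le.1 (hE n)).1
      unfold lyap
      linarith
    linarith
  · have : lyap lam v α E - ε / 2 ≤ lyap lam v α E₀ := le_ciInf fun n => by
      have h1 := ciInf_le (hbdd E) n
      have h2 := (abs_le.1 (hE n)).2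
      unfold lyap
      linarith
    linarith

end
end
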